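/- arXiv:2603.21267 — 2 statements merged into one kernel-verified Lean document; each statement's English description precedes it below -/
import Mathlib

section
/- Every generalized geometric Brascamp–Lieb datum (C,p,Q) has regularized Brascamp–Lieb constant BL(C,p,Q) = 1; equivalently, for all nonnegative f_j ∈ L¹(ℝ^{n_j}) with f_j more log-convex than g_{Q_j} (1 ≤ j ≤ m), ∫_{ℝⁿ} ∏_{j=1}^m f_j(C_j x)^{p_j} dx ≤ ∏_{j=1}^m (∫_{ℝ^{n_j}} f_j)^{p_j}, and the constant 1 cannot be improved. -/
open MeasureTheory Matrix
open scoped ENNReal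

noncomputable section

/-- The centered Gaussian function attached to a matrix `Q` : `g_Q(x) = exp(-π⟨Qx,x⟩)`. -/
def gaussFn {k : ℕ} (Q : Matrix (Fin k) (Fin k) ℝ) (x : Fin k → ℝ) : ℝ :=
  Real.exp (-Real.pi * (Q.mulVec x ⬝ᵥ x))

/-- A nonnegative log-convex function. -/
def LogConvexFun {k : ℕ} (h : (Fin k → ℝ) → ℝ) : Prop :=
  (∀ x, 0 ≤ h x) ∧
    ∀ x y : Fin k → ℝ, ∀ a b : ℝ, 0 ≤ a → 0 ≤ b → a + b = 1 →
      h (a • x + b • y) ≤ h x ^ a * h y ^ b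

/-- `f` is more log-convex than `g_Q`, i.e. `f = g_Q · h` with `h` log-convex. -/
def MoreLogConvex {k : ℕ} (f : (Fin k → ℝ) → ℝ) (Q : Matrix (Fin k) (Fin k) ℝ) : Prop :=
  ∃ h : (Fin k → ℝ) → ℝ, LogConvexFun h ∧ f = fun x => gaussFn Q x * h x

/-- The regularized Brascamp–Lieb constant of a datum `(C, p, Q)`. -/
def BLconst {n m : ℕ} {ni : Fin m → ℕ} (C : ∀ i, Matrix (Fin (ni i)) (Fin n) ℝ)
    (p : Fin m → ℝ) (Q : ∀ i, Matrix (Fin (ni i)) (Fin (ni i)) ℝ) : ℝ≥0∞ :=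
  ⨆ (B : ∀ i, Matrix (Fin (ni i)) (Fin (ni i)) ℝ)
    (_ : ∀ i, (B i).PosDef ∧ (Q i - B i).PosSemidef),
    ((∏ i, ENNReal.ofReal ((B i).det) ^ p i) /
        ENNReal.ofReal ((∑ i, p i • ((C i)ᵀ * B i * C i)).det)) ^ ((2 : ℝ)⁻¹)

/-- A generalized geometric Brascamp–Lieb datum. -/
def GeometricDatum {n m : ℕ} {ni : Fin m → ℕ} (C : ∀ j, Matrix (Fin (ni j)) (Fin n) ℝ)
    (p : Fin m → ℝ) (Q : ∀ j, Matrix (Fin (ni j)) (Fin (ni j)) ℝ) : Prop :=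
  (∀ j, ((1 : Matrix (Fin (ni j)) (Fin (ni j)) ℝ) - C j * (C j)ᵀ).PosSemidef) ∧
    (∀ j, (Q j - 1).PosSemidef) ∧
    (∀ j, ((1 : Matrix (Fin (ni j)) (Fin (ni j)) ℝ) - C j * (C j)ᵀ) * (Q j - 1) = 0) ∧
    (∑ j, p j • ((C j)ᵀ * C j) = 1)

/-- The Gaussian probability measure with density `exp(-π|x|²)`. -/
def gaussMeasure (k : ℕ) : Measure (Fin k → ℝ) :=
  volume.withDensity fun x => ENNReal.ofReal (Real.exp (-Real.pi * (x ⬝ᵥ x)))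

lemma measurable_gaussDensity (k : ℕ) :
    Measurable fun x : Fin k → ℝ => Real.exp (-Real.pi * (x ⬝ᵥ x)) := by
  unfold dotProduct
  fun_prop

lemma integral_gaussMeasure {k : ℕ} {E : Type*} [NormedAddCommGroup E] [NormedSpace ℝ E]
    (F : (Fin k → ℝ) → E) :
    ∫ x, F x ∂gaussMeasure k = ∫ x, Real.exp (-Real.pi * (x ⬝ᵥ x)) • F x := by
  unfold gaussMeasure
  rw [integral_withDensity_eq_integral_toReal_smul
    (measurable_gaussDensity k).ennreal_ofReal (by simp)]
  simp [Real.exp_nonneg]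

lemma integrable_gaussMeasure_iff {k : ℕ} {E : Type*} [NormedAddCommGroup E] [NormedSpace ℝ E]
    (F : (Fin k → ℝ) → E) :
    Integrable F (gaussMeasure k) ↔
      Integrable fun x => Real.exp (-Real.pi * (x ⬝ᵥ x)) • F x := by
  unfold gaussMeasure
  rw [integrable_withDensity_iff_integrable_smul'
    (measurable_gaussDensity k).ennreal_ofReal (by simp)]
  simp [Real.exp_nonneg]

lemma lintegral_gaussMeasure {k : ℕ} {F : (Fin k → ℝ) → ℝ≥0∞} (hF : Measurable F) :
    ∫⁻ x, F x ∂gaussMeasure k =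
      ∫⁻ x, ENNReal.ofReal (Real.exp (-Real.pi * (x ⬝ᵥ x))) * F x := by
  unfold gaussMeasure
  rw [lintegral_withDensity_eq_lintegral_mul _ (measurable_gaussDensity k).ennreal_ofReal hF]
  rfl

lemma integral_cexp_dotProduct_gaussMeasure {k : ℕ} (a : Fin k → ℝ) (z : ℂ) :
    ∫ x, Complex.exp (z * ((a ⬝ᵥ x : ℝ) : ℂ)) ∂gaussMeasure k =
      Complex.exp (z ^ 2 * ((a ⬝ᵥ a : ℝ) : ℂ) / (4 * Real.pi)) := by
  have h := GaussianFourier.integral_cexp_neg_mul_sum_add (ι := Fin k) (b := (Real.pi : ℂ))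
    (by simpa using Real.pi_pos) (fun i => z * a i)
  rw [div_self (by simp), Complex.one_cpow, one_mul] at h
  rw [integral_gaussMeasure]
  convert h using 2
  · ext x
    rw [Complex.exp_add, Complex.real_smul]
    simp [dotProduct, Finset.mul_sum, mul_assoc, pow_two]
  · simp [dotProduct, Finset.mul_sum, pow_two, mul_mul_mul_comm]

instance isProbabilityMeasure_gaussMeasure (k : ℕ) : IsProbabilityMeasure (gaussMeasure k) := by
  have h := integral_cexp_dotProduct_gaussMeasure (0 : Fin k → ℝ) 0
  have h1 : (gaussMeasure k).real Set.univ = 1 := by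
    simp only [zero_mul, Complex.exp_zero, integral_const, ne_eq, OfNat.ofNat_ne_zero,
      not_false_eq_true, zero_pow, zero_div, Complex.real_smul, mul_one] at h
    exact_mod_cast h
  refine ⟨?_⟩
  rwa [measureReal_def, ENNReal.toReal_eq_one_iff] at h1

lemma integrable_exp_dotProduct_gaussMeasure {k : ℕ} (a : Fin k → ℝ) :
    Integrable (fun x => Real.exp (a ⬝ᵥ x)) (gaussMeasure k) := by
  have h := GaussianFourier.integrable_cexp_neg_mul_sum_add (ι := Fin k) (b := (Real.pi : ℂ))
    (by simpa using Real.pi_pos) (fun i => (a i : ℂ))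
  rw [integrable_gaussMeasure_iff]
  convert h.re using 2 with x
  have : (-(Real.pi : ℂ) * ∑ i, (x i : ℂ) ^ 2 + ∑ i, (a i : ℂ) * x i) =
      ((-Real.pi * (x ⬝ᵥ x) + a ⬝ᵥ x : ℝ) : ℂ) := by
    simp [dotProduct, pow_two]
  rw [this, ← Complex.ofReal_exp, Real.exp_add]
  exact (Complex.ofReal_re _).symm

lemma exp_mul_norm_le_sum {k : ℕ} {c : ℝ} (x : Fin k → ℝ) :
    Real.exp (c * ‖x‖) ≤
      1 + ∑ i, (Real.exp (c * x i) + Real.exp (-c * x i)) := by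
  have hnn : ∀ i, 0 ≤ Real.exp (c * x i) + Real.exp (-c * x i) := fun i => by positivity
  rcases isEmpty_or_nonempty (Fin k) with hk | hk
  · simp [Subsingleton.elim x 0]
  · obtain ⟨i, hi⟩ : ∃ i, ‖x‖ = ‖x i‖ := by
      obtain ⟨i, -, hi⟩ := Finset.exists_mem_eq_sup' Finset.univ_nonempty (fun i => ‖x i‖)
      refine ⟨i, le_antisymm ?_ (norm_le_pi_norm x i)⟩
      rw [← hi]
      exact (pi_norm_le_iff_of_nonempty _).2 fun j => Finset.le_sup' (fun i => ‖x i‖) (Finset.mem_univ j)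
    have h1 := Finset.single_le_sum (f := fun i => Real.exp (c * x i) + Real.exp (-c * x i))
      (fun i _ => hnn i) (Finset.mem_univ i)
    have h2 : Real.exp (c * ‖x‖) ≤ Real.exp (c * x i) + Real.exp (-c * x i) := by
      rw [hi, Real.norm_eq_abs]
      have := Real.exp_pos (c * x i)
      have := Real.exp_pos (-c * x i)
      rcases abs_cases (x i) with h | h
      · rw [h.1]; linarith
      · rw [h.1, mul_neg, ← neg_mul]; linarith
    linarith

lemma integrable_exp_mul_norm_gaussMeasure (k : ℕ) (c : ℝ) :
    Integrable (fun x => Real.exp (c * ‖x‖)) (gaussMeasure k) := by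
  have h : ∀ (c : ℝ) (i : Fin k), Integrable (fun x => Real.exp (c * x i)) (gaussMeasure k) := by
    intro c i
    simpa using integrable_exp_dotProduct_gaussMeasure (Pi.single i c)
  refine Integrable.mono' (g := fun x => 1 + ∑ i, (Real.exp (c * x i) + Real.exp (-c * x i)))
    ?_ (by fun_prop) ?_
  · exact (integrable_const _).add (integrable_finsetSum _ fun i _ => (h c i).add (h (-c) i))
  · filter_upwards with x
    rw [Real.norm_eq_abs, Real.abs_exp]
    exact exp_mul_norm_le_sum x

lemma pow_mul_exp_mul_norm_le (m : ℕ) (c t : ℝ) (ht : 0 ≤ t) :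
    t ^ m * Real.exp (c * t) ≤ m.factorial * Real.exp ((c + 1) * t) := by
  have h : t ^ m ≤ m.factorial * Real.exp t := by
    have := Real.pow_div_factorial_le_exp t ht m
    rwa [div_le_iff₀' (by positivity)] at this
  rw [add_mul, one_mul, Real.exp_add]
  nlinarith [Real.exp_pos (c * t)]

lemma integrable_pow_mul_exp_mul_norm_gaussMeasure (k m : ℕ) (c : ℝ) :
    Integrable (fun x => ‖x‖ ^ m * Real.exp (c * ‖x‖)) (gaussMeasure k) := by
  refine Integrable.mono' ((integrable_exp_mul_norm_gaussMeasure k (c + 1)).const_mul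
    (m.factorial : ℝ)) (by fun_prop) ?_
  filter_upwards with x
  rw [Real.norm_of_nonneg (by positivity)]
  exact pow_mul_exp_mul_norm_le m c ‖x‖ (norm_nonneg x)

lemma charFunDual_gaussMeasure {k : ℕ} (L : StrongDual ℝ (Fin k → ℝ)) (a : Fin k → ℝ)
    (hL : ∀ x, L x = a ⬝ᵥ x) :
    charFunDual (gaussMeasure k) L =
      Complex.exp (-((a ⬝ᵥ a : ℝ) : ℂ) / (4 * Real.pi)) := by
  rw [charFunDual_apply]
  have := integral_cexp_dotProduct_gaussMeasure a Complex.I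
  simp only [Complex.I_sq, neg_mul, one_mul] at this
  rw [← this]
  simp_rw [hL, mul_comm]

/-- If `ξ, ζ` are independent Gaussian vectors and `C Cᵀ + D Dᵀ = 1`, then `Cξ + Dζ` is again a
standard Gaussian vector. -/
lemma map_mulVec_add_mulVec_gaussMeasure {n l k : ℕ} (C : Matrix (Fin k) (Fin n) ℝ)
    (D : Matrix (Fin k) (Fin l) ℝ) (h : C * Cᵀ + D * Dᵀ = 1) :
    ((gaussMeasure n).prod (gaussMeasure l)).map (fun z => C *ᵥ z.1 + D *ᵥ z.2) =
      gaussMeasure k := by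
  let T : ((Fin n → ℝ) × (Fin l → ℝ)) →L[ℝ] (Fin k → ℝ) :=
    (C.mulVecLin.toContinuousLinearMap).coprod (D.mulVecLin.toContinuousLinearMap)
  have hT : (fun z : (Fin n → ℝ) × (Fin l → ℝ) => C *ᵥ z.1 + D *ᵥ z.2) = T := by
    ext z; simp [T]
  rw [hT]
  have : IsProbabilityMeasure (((gaussMeasure n).prod (gaussMeasure l)).map T) :=
    Measure.isProbabilityMeasure_map (by fun_prop)
  refine Measure.ext_of_charFunDual ?_
  ext L
  have hL : ∀ x, L x = (fun i => L (Pi.single i 1)) ⬝ᵥ x := by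
    intro x
    conv_lhs => rw [← Finset.univ_sum_single x, map_sum]
    refine Finset.sum_congr rfl fun i _ => ?_
    rw [mul_comm, ← smul_eq_mul, ← map_smul, ← Pi.single_smul]
    simp
  set a : Fin k → ℝ := fun i => L (Pi.single i 1)
  rw [charFunDual_map, charFunDual_prod, charFunDual_gaussMeasure _ (a ᵥ* C),
    charFunDual_gaussMeasure _ (a ᵥ* D), charFunDual_gaussMeasure _ a hL, ← Complex.exp_add]
  · congr 1
    have : a ⬝ᵥ a = (a ᵥ* C) ⬝ᵥ (a ᵥ* C) + (a ᵥ* D) ⬝ᵥ (a ᵥ* D) := by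
      have key : ∀ {r : ℕ} (E : Matrix (Fin k) (Fin r) ℝ),
          (a ᵥ* (E * Eᵀ)) ⬝ᵥ a = (a ᵥ* E) ⬝ᵥ (a ᵥ* E) := fun E => by
        rw [← vecMul_vecMul, ← dotProduct_mulVec, mulVec_transpose]
      rw [← key, ← key, ← add_dotProduct, ← vecMul_add, h, vecMul_one]
    rw [this]
    push_cast
    ring
  · intro x
    simp [T, hL, dotProduct_mulVec]
  · intro x
    simp [T, hL, dotProduct_mulVec]

lemma integral_gaussMeasure_eq_integral_integral {n l k : ℕ} (C : Matrix (Fin k) (Fin n) ℝ)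
    (D : Matrix (Fin k) (Fin l) ℝ) (h : C * Cᵀ + D * Dᵀ = 1) {F : (Fin k → ℝ) → ℝ}
    (hF : Integrable F (gaussMeasure k)) :
    Integrable (fun z : (Fin n → ℝ) × (Fin l → ℝ) => F (C *ᵥ z.1 + D *ᵥ z.2))
      ((gaussMeasure n).prod (gaussMeasure l)) ∧
    ∫ x, F x ∂gaussMeasure k =
      ∫ x, ∫ z, F (C *ᵥ x + D *ᵥ z) ∂gaussMeasure l ∂gaussMeasure n := by
  have hm : Measurable fun z : (Fin n → ℝ) × (Fin l → ℝ) => C *ᵥ z.1 + D *ᵥ z.2 := by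
    apply Continuous.measurable; fun_prop
  rw [← map_mulVec_add_mulVec_gaussMeasure C D h] at hF ⊢
  have hi := (integrable_map_measure hF.1 hm.aemeasurable).1 hF
  refine ⟨hi, ?_⟩
  rw [integral_map hm.aemeasurable hF.1]
  exact integral_prod _ hi

lemma integral_gaussMeasure_add_eq {k : ℕ} (F : (Fin k → ℝ) → ℝ) (v : Fin k → ℝ) :
    ∫ x, F (x + v) ∂gaussMeasure k =
      ∫ x, F x * Real.exp (2 * Real.pi * (x ⬝ᵥ v) - Real.pi * (v ⬝ᵥ v)) ∂gaussMeasure k := by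
  rw [integral_gaussMeasure, integral_gaussMeasure,
    ← integral_add_right_eq_self _ v]
  conv_rhs => rw [← integral_add_right_eq_self _ v]
  rw [integral_add_right_eq_self (fun x => Real.exp (-Real.pi * (x ⬝ᵥ x)) • F (x + v)) v]
  congr 1
  ext x
  simp only [smul_eq_mul]
  rw [mul_comm (F _), ← mul_assoc, ← Real.exp_add]
  congr 2
  simp only [dotProduct_add, add_dotProduct, dotProduct_comm v x]
  ring

/-- The variance of one coordinate of a Gaussian vector. -/
def gaussVar : ℝ := ∫ x, x 0 ^ 2 ∂gaussMeasure 1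

lemma gaussVar_nonneg : 0 ≤ gaussVar := integral_nonneg fun _ => sq_nonneg _

lemma integrable_of_abs_le_gaussMeasure {k : ℕ} {F : (Fin k → ℝ) → ℝ} (hF : Continuous F) (A c : ℝ)
    (m : ℕ) (h : ∀ x, |F x| ≤ A * (‖x‖ ^ m * Real.exp (c * ‖x‖))) :
    Integrable F (gaussMeasure k) :=
  Integrable.mono' ((integrable_pow_mul_exp_mul_norm_gaussMeasure k m c).const_mul A)
    hF.aestronglyMeasurable (Filter.Eventually.of_forall h)

lemma abs_dotProduct_le {k : ℕ} (a x : Fin k → ℝ) : |a ⬝ᵥ x| ≤ (∑ i, |a i|) * ‖x‖ := by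
  rw [Finset.sum_mul]
  refine (Finset.abs_sum_le_sum_abs _ _).trans (Finset.sum_le_sum fun i _ => ?_)
  rw [abs_mul]
  exact mul_le_mul_of_nonneg_left (norm_le_pi_norm x i) (abs_nonneg _)

lemma integrable_dotProduct_gaussMeasure {k : ℕ} (a : Fin k → ℝ) :
    Integrable (fun x => a ⬝ᵥ x) (gaussMeasure k) :=
  integrable_of_abs_le_gaussMeasure (by fun_prop) (∑ i, |a i|) 0 1 fun x => by
    simpa using abs_dotProduct_le a x

lemma integrable_dotProduct_sq_gaussMeasure {k : ℕ} (a : Fin k → ℝ) :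
    Integrable (fun x => (a ⬝ᵥ x) ^ 2) (gaussMeasure k) :=
  integrable_of_abs_le_gaussMeasure (by fun_prop) ((∑ i, |a i|) ^ 2) 0 2 fun x => by
    rw [abs_pow]
    simpa [mul_pow] using pow_le_pow_left₀ (abs_nonneg _) (abs_dotProduct_le a x) 2

lemma integral_dotProduct_gaussMeasure {k : ℕ} (a : Fin k → ℝ) :
    ∫ x, a ⬝ᵥ x ∂gaussMeasure k = 0 := by
  have h := (integral_gaussMeasure_eq_integral_integral (n := k) (l := 0) (-1) 0 (by simp)
    (integrable_dotProduct_gaussMeasure a)).2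
  simp only [neg_mulVec, one_mulVec, zero_mulVec, add_zero, dotProduct_neg, integral_const,
    probReal_univ, smul_eq_mul, one_mul, integral_neg] at h
  linarith

lemma integral_dotProduct_sq_gaussMeasure {k : ℕ} (a : Fin k → ℝ) :
    ∫ x, (a ⬝ᵥ x) ^ 2 ∂gaussMeasure k = gaussVar * (a ⬝ᵥ a) := by
  by_cases ha : a = 0
  · simp [ha]
  have hpos : 0 < a ⬝ᵥ a := by
    have : a ⬝ᵥ a ≠ 0 := by simpa using ha
    exact lt_of_le_of_ne (Finset.sum_nonneg fun i _ => mul_self_nonneg _) this.symm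
  have hs := Real.sq_sqrt hpos.le
  set s := √(a ⬝ᵥ a)
  have hs0 : 0 < s := Real.sqrt_pos.2 hpos
  have h := (integral_gaussMeasure_eq_integral_integral (n := k) (l := 0) (k := 1)
    (Matrix.of fun _ => s⁻¹ • a) 0 (by
      have h1 : (s⁻¹ • a) ⬝ᵥ (s⁻¹ • a) = 1 := by
        rw [smul_dotProduct, dotProduct_smul, ← hs, smul_eq_mul, smul_eq_mul]; field_simp
      refine Matrix.ext fun i j => ?_
      obtain rfl := Subsingleton.elim i j
      rw [Matrix.zero_mul, add_zero, Matrix.one_apply_eq]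
      exact h1)
    (F := fun x => x 0 ^ 2) (by
      simpa [dotProduct] using integrable_dotProduct_sq_gaussMeasure (fun _ : Fin 1 => (1 : ℝ)))).2
  have h2 : ∀ x, (Matrix.of fun _ : Fin 1 => s⁻¹ • a) *ᵥ x = fun _ => s⁻¹ * (a ⬝ᵥ x) := by
    intro x; ext i; exact smul_dotProduct s⁻¹ a x
  simp only [h2, zero_mulVec, add_zero, integral_const, probReal_univ, one_smul, mul_pow,
    integral_const_mul] at h
  rw [gaussVar, h, ← hs]
  field_simp

/-- `h` is positive and `log h` is `M`-Lipschitz. -/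
def LogLip {k : ℕ} (M : ℝ) (h : (Fin k → ℝ) → ℝ) : Prop :=
  (∀ x, 0 < h x) ∧ ∀ x y, h x ≤ Real.exp (M * ‖x - y‖) * h y

/-- `h` is midpoint log-convex in the directions of the kernel of `W`. -/
def MidLogConvexAlong {k : ℕ} (W : Matrix (Fin k) (Fin k) ℝ) (h : (Fin k → ℝ) → ℝ) : Prop :=
  ∀ x v, W *ᵥ v = 0 → h x ^ 2 ≤ h (x + v) * h (x - v)

/-- The heat flow at time `t`, normalized by the Gaussian with density `exp(-π|x|²)`. -/
def heat {k : ℕ} (t : ℝ) (h : (Fin k → ℝ) → ℝ) (x : Fin k → ℝ) : ℝ :=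
  ∫ ξ, h (x + √t • ξ) ∂gaussMeasure k

section LogLip

variable {k : ℕ} {M : ℝ} {h : (Fin k → ℝ) → ℝ}

lemma LogLip.log_sub_log_le (hh : LogLip M h) (x y : Fin k → ℝ) :
    Real.log (h x) - Real.log (h y) ≤ M * ‖x - y‖ := by
  have := Real.log_le_log (hh.1 x) (hh.2 x y)
  rw [Real.log_mul (Real.exp_pos _).ne' (hh.1 y).ne', Real.log_exp] at this
  linarith

lemma LogLip.abs_log_sub_log_le (hh : LogLip M h) (x y : Fin k → ℝ) :
    |Real.log (h x) - Real.log (h y)| ≤ M * ‖x - y‖ := by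
  rw [abs_le]
  have h1 := hh.log_sub_log_le x y
  have h2 := hh.log_sub_log_le y x
  rw [norm_sub_rev] at h2
  constructor <;> linarith

lemma LogLip.continuous_log (hh : LogLip M h) : Continuous fun x => Real.log (h x) := by
  refine (LipschitzWith.of_dist_le_mul (K := M.toNNReal) fun x y => ?_).continuous
  rw [Real.dist_eq, dist_eq_norm]
  exact (hh.abs_log_sub_log_le x y).trans
    (mul_le_mul_of_nonneg_right (Real.le_coe_toNNReal M) (norm_nonneg _))

lemma LogLip.continuous (hh : LogLip M h) : Continuous h := by
  have : h = fun x => Real.exp (Real.log (h x)) := by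
    ext x; rw [Real.exp_log (hh.1 x)]
  rw [this]
  exact Real.continuous_exp.comp hh.continuous_log

lemma logLip_of_abs_log_sub_log_le (hpos : ∀ x, 0 < h x)
    (hlip : ∀ x y, Real.log (h x) - Real.log (h y) ≤ M * ‖x - y‖) : LogLip M h := by
  refine ⟨hpos, fun x y => ?_⟩
  rw [← Real.log_le_log_iff (hpos x) (mul_pos (Real.exp_pos _) (hpos y)),
    Real.log_mul (Real.exp_pos _).ne' (hpos y).ne', Real.log_exp]
  linarith [hlip x y]

lemma LogLip.le_add_smul (hh : LogLip M h) (x ξ : Fin k → ℝ) (s : ℝ) :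
    h (x + s • ξ) ≤ Real.exp (M * |s| * ‖ξ‖) * h x := by
  have := hh.2 (x + s • ξ) x
  rwa [add_sub_cancel_left, norm_smul, Real.norm_eq_abs, ← mul_assoc] at this

lemma LogLip.add_smul_ge (hh : LogLip M h) (x ξ : Fin k → ℝ) (s : ℝ) :
    Real.exp (-(M * |s|) * ‖ξ‖) * h x ≤ h (x + s • ξ) := by
  have := hh.2 x (x + s • ξ)
  rw [sub_add_cancel_left, norm_neg, norm_smul, Real.norm_eq_abs, ← mul_assoc] at this
  rw [neg_mul, Real.exp_neg, inv_mul_le_iff₀ (Real.exp_pos _)]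
  exact this

lemma LogLip.integrable (hh : LogLip M h) (x : Fin k → ℝ) (s : ℝ) :
    Integrable (fun ξ => h (x + s • ξ)) (gaussMeasure k) := by
  have := hh.continuous
  refine integrable_of_abs_le_gaussMeasure (by fun_prop) (h x) (M * |s|) 0 fun ξ => ?_
  rw [abs_of_pos (hh.1 _), pow_zero, one_mul, mul_comm]
  exact hh.le_add_smul x ξ s

lemma integral_gaussMeasure_pos {F : (Fin k → ℝ) → ℝ} (hF : Integrable F (gaussMeasure k))
    (hpos : ∀ x, 0 < F x) : 0 < ∫ x, F x ∂gaussMeasure k := by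
  rw [integral_pos_iff_support_of_nonneg (fun x => (hpos x).le) hF]
  have : Function.support F = Set.univ := by ext x; simp [(hpos x).ne']
  simp [this]

lemma heat_pos (hh : LogLip M h) (t : ℝ) (x : Fin k → ℝ) : 0 < heat t h x :=
  integral_gaussMeasure_pos (hh.integrable x _) fun _ => hh.1 _

lemma LogLip.heat (hh : LogLip M h) (t : ℝ) : LogLip M (heat t h) := by
  refine ⟨heat_pos hh t, fun x y => ?_⟩
  unfold _root_.heat
  rw [← integral_const_mul]
  refine integral_mono (hh.integrable x _) ((hh.integrable y _).const_mul _) fun ξ => ?_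
  simpa using hh.2 (x + √t • ξ) (y + √t • ξ)

lemma heat_le (hh : LogLip M h) (t : ℝ) (x : Fin k → ℝ) :
    heat t h x ≤ (∫ ξ, Real.exp (M * √t * ‖ξ‖) ∂gaussMeasure k) * h x := by
  unfold heat
  rw [← integral_mul_const]
  refine integral_mono (hh.integrable x _)
    ((integrable_exp_mul_norm_gaussMeasure k _).mul_const _) fun ξ => ?_
  simpa [abs_of_nonneg (Real.sqrt_nonneg t)] using hh.le_add_smul x ξ √t

lemma le_heat (hh : LogLip M h) (t : ℝ) (x : Fin k → ℝ) :
    (∫ ξ, Real.exp (-(M * √t) * ‖ξ‖) ∂gaussMeasure k) * h x ≤ heat t h x := by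
  unfold heat
  rw [← integral_mul_const]
  refine integral_mono ((integrable_exp_mul_norm_gaussMeasure k _).mul_const _)
    (hh.integrable x _) fun ξ => ?_
  simpa [abs_of_nonneg (Real.sqrt_nonneg t)] using hh.add_smul_ge x ξ √t

lemma heat_heat (hh : LogLip M h) {s t : ℝ} (hs : 0 ≤ s) (ht : 0 ≤ t) :
    heat s (heat t h) = heat (s + t) h := by
  ext x
  rcases (add_nonneg hs ht).eq_or_lt with h0 | h0
  · obtain rfl : s = 0 := by linarith
    obtain rfl : t = 0 := by linarith
    simp [heat]
  have hr : √(s + t) ≠ 0 := (Real.sqrt_pos.2 h0).ne'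
  have hmul : ∀ c : ℝ, (c • (1 : Matrix (Fin k) (Fin k) ℝ)) * (c • (1 : Matrix (Fin k) (Fin k) ℝ))ᵀ
      = c ^ 2 • (1 : Matrix (Fin k) (Fin k) ℝ) := by
    intro c
    simp [smul_smul, pow_two]
  have key := (integral_gaussMeasure_eq_integral_integral
    ((√s / √(s + t)) • (1 : Matrix (Fin k) (Fin k) ℝ))
    ((√t / √(s + t)) • (1 : Matrix (Fin k) (Fin k) ℝ)) (by
      rw [hmul, hmul, ← add_smul, div_pow, div_pow, Real.sq_sqrt hs, Real.sq_sqrt ht,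
        Real.sq_sqrt h0.le, ← add_div, div_self h0.ne', one_smul])
    (hh.integrable x √(s + t))).2
  unfold heat
  rw [key]
  simp only [smul_mulVec, one_mulVec, smul_add, smul_smul, mul_div_cancel₀ _ hr, add_assoc]

lemma MidLogConvexAlong.heat {W : Matrix (Fin k) (Fin k) ℝ} (hW : MidLogConvexAlong W h)
    (hh : LogLip M h) (t : ℝ) : MidLogConvexAlong W (heat t h) := by
  intro x v hv
  have hu := heat_pos hh t x
  have hm := heat_pos hh t (x - v)
  set u := _root_.heat t h x with hu_def
  set um := _root_.heat t h (x - v) with hm_def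
  set up := _root_.heat t h (x + v) with hp_def
  set c := um / u with hc
  have hc0 : 0 < c := div_pos hm hu
  have key : 2 * u ≤ c * up + c⁻¹ * um := by
    rw [hu_def, hp_def, hm_def]
    unfold _root_.heat
    rw [← integral_const_mul, ← integral_const_mul, ← integral_const_mul, ← integral_add
      ((hh.integrable _ _).const_mul _) ((hh.integrable _ _).const_mul _)]
    refine integral_mono ((hh.integrable _ _).const_mul _)
      (((hh.integrable _ _).const_mul _).add ((hh.integrable _ _).const_mul _)) fun ξ => ?_
    have h1 := hW (x + √t • ξ) v hv
    rw [add_right_comm, add_sub_right_comm] at h1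
    have hA := hh.1 (x + √t • ξ)
    have hB := hh.1 (x + v + √t • ξ)
    have hC := hh.1 (x - v + √t • ξ)
    show 2 * h (x + √t • ξ) ≤ c * h (x + v + √t • ξ) + c⁻¹ * h (x - v + √t • ξ)
    refine le_of_sq_le_sq ?_ (by positivity)
    have : c * h (x + v + √t • ξ) * (c⁻¹ * h (x - v + √t • ξ)) =
        h (x + v + √t • ξ) * h (x - v + √t • ξ) := by field_simp
    nlinarith [sq_nonneg (c * h (x + v + √t • ξ) - c⁻¹ * h (x - v + √t • ξ))]
  have h2 : c * u = um := by rw [hc]; field_simp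
  have h3 : c⁻¹ * um = u := by rw [← h2]; field_simp
  rw [h3] at key
  have h4 : u ≤ c * up := by linarith
  calc u ^ 2 = u * u := pow_two u
    _ ≤ (c * up) * u := mul_le_mul_of_nonneg_right h4 hu.le
    _ = up * um := by rw [← h2]; ring

end LogLip

lemma abs_exp_sub_taylor_le (x : ℝ) (n : ℕ) :
    |Real.exp x - ∑ m ∈ Finset.range n, x ^ m / m.factorial| ≤ |x| ^ n * Real.exp |x| := by
  have := Complex.norm_exp_sub_sum_le_norm_mul_exp (x : ℂ) n
  rw [← Complex.ofReal_exp] at this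
  have h2 : ((Real.exp x : ℝ) : ℂ) - ∑ m ∈ Finset.range n, (x : ℂ) ^ m / m.factorial =
      ((Real.exp x - ∑ m ∈ Finset.range n, x ^ m / m.factorial : ℝ) : ℂ) := by
    push_cast; rfl
  rwa [h2, Complex.norm_real, Complex.norm_real, Real.norm_eq_abs, Real.norm_eq_abs] at this

lemma abs_exp_sub_one_sub_le (x : ℝ) : |Real.exp x - 1 - x| ≤ |x| ^ 2 * Real.exp |x| := by
  have := abs_exp_sub_taylor_le x 2
  simpa [Finset.sum_range_succ, sub_sub] using this

lemma abs_exp_sub_one_sub_sub_le (x : ℝ) :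
    |Real.exp x - 1 - x - x ^ 2 / 2| ≤ |x| ^ 3 * Real.exp |x| := by
  have := abs_exp_sub_taylor_le x 3
  simpa [Finset.sum_range_succ, sub_sub, Nat.factorial, add_assoc] using this

lemma abs_dotProduct_le_card {k : ℕ} (a x : Fin k → ℝ) : |a ⬝ᵥ x| ≤ k * ‖a‖ * ‖x‖ := by
  refine (abs_dotProduct_le a x).trans (mul_le_mul_of_nonneg_right ?_ (norm_nonneg x))
  calc ∑ i, |a i| ≤ ∑ _i : Fin k, ‖a‖ := Finset.sum_le_sum fun i _ => norm_le_pi_norm a i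
    _ = k * ‖a‖ := by simp

/-- A weighted Gaussian average of `exp (β⟨ξ, y⟩ - τ)` with total weight `1`, compared with its
linearization in `y`. -/
lemma exists_log_weighted_integral_expansion (k : ℕ) {A c β : ℝ} (hA : 0 ≤ A) (hβ : 0 ≤ β) :
    ∃ K, 0 ≤ K ∧ ∀ w : (Fin k → ℝ) → ℝ, Continuous w → (∀ ξ, 0 ≤ w ξ) →
      (∀ ξ, w ξ ≤ A * Real.exp (c * ‖ξ‖)) → ∫ ξ, w ξ ∂gaussMeasure k = 1 →
      ∃ a : Fin k → ℝ, (∀ y, |a ⬝ᵥ y| ≤ K * ‖y‖) ∧ ∀ y τ, 0 ≤ τ →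
        0 < ∫ ξ, w ξ * Real.exp (β * (ξ ⬝ᵥ y) - τ) ∂gaussMeasure k →
        a ⬝ᵥ y - τ ≤ Real.log (∫ ξ, w ξ * Real.exp (β * (ξ ⬝ᵥ y) - τ) ∂gaussMeasure k) ∧
        (‖y‖ ≤ 1 → Real.log (∫ ξ, w ξ * Real.exp (β * (ξ ⬝ᵥ y) - τ) ∂gaussMeasure k) ≤
          a ⬝ᵥ y + K * ‖y‖ ^ 2) := by
  set I1 := ∫ ξ, ‖ξ‖ ^ 1 * Real.exp (c * ‖ξ‖) ∂gaussMeasure k with hI1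
  set I2 := ∫ ξ, ‖ξ‖ ^ 2 * Real.exp ((c + β * k) * ‖ξ‖) ∂gaussMeasure k with hI2
  have hI1n : 0 ≤ I1 := integral_nonneg fun ξ => by positivity
  have hI2n : 0 ≤ I2 := integral_nonneg fun ξ => by positivity
  have hβk : 0 ≤ β * k := by positivity
  refine ⟨A * (β * k) * I1 + A * (β * k) ^ 2 * I2, by positivity, fun w hwc hw0 hwA hw1 => ?_⟩
  have hwi : Integrable w (gaussMeasure k) := by
    refine integrable_of_abs_le_gaussMeasure hwc A c 0 fun ξ => ?_
    rw [abs_of_nonneg (hw0 ξ), pow_zero, one_mul]; exact hwA ξ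
  have ht : ∀ ξ y : Fin k → ℝ, |β * (ξ ⬝ᵥ y)| ≤ β * k * ‖ξ‖ * ‖y‖ := by
    intro ξ y
    rw [abs_mul, abs_of_nonneg hβ]
    calc β * |ξ ⬝ᵥ y| ≤ β * (k * ‖ξ‖ * ‖y‖) :=
        mul_le_mul_of_nonneg_left (abs_dotProduct_le_card ξ y) hβ
      _ = _ := by ring
  have hti : ∀ y, Integrable (fun ξ => w ξ * (β * (ξ ⬝ᵥ y))) (gaussMeasure k) := by
    intro y
    refine integrable_of_abs_le_gaussMeasure (by fun_prop) (A * (β * k) * ‖y‖) c 1 fun ξ => ?_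
    rw [abs_mul, abs_of_nonneg (hw0 ξ)]
    calc w ξ * |β * (ξ ⬝ᵥ y)| ≤ A * Real.exp (c * ‖ξ‖) * (β * k * ‖ξ‖ * ‖y‖) :=
        mul_le_mul (hwA ξ) (ht ξ y) (abs_nonneg _) (by positivity)
      _ = _ := by ring
  have hei : ∀ y τ, Integrable (fun ξ => w ξ * Real.exp (β * (ξ ⬝ᵥ y) - τ))
      (gaussMeasure k) := by
    intro y τ
    refine integrable_of_abs_le_gaussMeasure (by fun_prop) (A * Real.exp (-τ))
      (c + β * k * ‖y‖) 0 fun ξ => ?_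
    rw [abs_mul, abs_of_nonneg (hw0 ξ), Real.abs_exp, pow_zero, one_mul]
    calc w ξ * Real.exp (β * (ξ ⬝ᵥ y) - τ)
        ≤ A * Real.exp (c * ‖ξ‖) * Real.exp (β * k * ‖ξ‖ * ‖y‖ - τ) := by
          refine mul_le_mul (hwA ξ) (Real.exp_le_exp.2 ?_) (Real.exp_pos _).le (by positivity)
          linarith [le_abs_self (β * (ξ ⬝ᵥ y)), ht ξ y]
      _ = _ := by
          rw [mul_assoc A, mul_assoc A, ← Real.exp_add, ← Real.exp_add]; congr 2; ring
  have hay : ∀ y, (fun i => ∫ ξ, w ξ * (β * ξ i) ∂gaussMeasure k) ⬝ᵥ y =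
      ∫ ξ, w ξ * (β * (ξ ⬝ᵥ y)) ∂gaussMeasure k := by
    intro y
    have hi : ∀ i, Integrable (fun ξ : Fin k → ℝ => w ξ * (β * ξ i) * y i) (gaussMeasure k) := by
      intro i
      simpa using (hti (Pi.single i 1)).mul_const (y i)
    simp only [dotProduct, Finset.mul_sum]
    rw [integral_finsetSum]
    · refine Finset.sum_congr rfl fun i _ => ?_
      rw [← integral_mul_const]
      simp only [mul_assoc]
    · intro i _
      simpa only [mul_assoc] using hi i
  refine ⟨fun i => ∫ ξ, w ξ * (β * ξ i) ∂gaussMeasure k, fun y => ?_, fun y τ hτ hpos => ⟨?_, ?_⟩⟩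
  · rw [hay]
    calc |∫ ξ, w ξ * (β * (ξ ⬝ᵥ y)) ∂gaussMeasure k|
        ≤ ∫ ξ, A * (β * k) * ‖y‖ * (‖ξ‖ ^ 1 * Real.exp (c * ‖ξ‖)) ∂gaussMeasure k := by
          rw [← Real.norm_eq_abs]
          refine norm_integral_le_of_norm_le
            ((integrable_pow_mul_exp_mul_norm_gaussMeasure k 1 c).const_mul _)
            (Filter.Eventually.of_forall fun ξ => ?_)
          rw [Real.norm_eq_abs, abs_mul, abs_of_nonneg (hw0 ξ)]
          calc w ξ * |β * (ξ ⬝ᵥ y)| ≤ A * Real.exp (c * ‖ξ‖) * (β * k * ‖ξ‖ * ‖y‖) :=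
              mul_le_mul (hwA ξ) (ht ξ y) (abs_nonneg _) (by positivity)
            _ = _ := by ring
      _ = A * (β * k) * I1 * ‖y‖ := by rw [integral_const_mul, ← hI1]; ring
      _ ≤ _ := mul_le_mul_of_nonneg_right (le_add_of_nonneg_right (by positivity)) (norm_nonneg y)
  · rw [hay]
    set m := ∫ ξ, w ξ * (β * (ξ ⬝ᵥ y)) ∂gaussMeasure k with hm
    rw [Real.le_log_iff_exp_le hpos]
    calc Real.exp (m - τ)
        = ∫ ξ, Real.exp (m - τ) * (w ξ * (1 - m) + w ξ * (β * (ξ ⬝ᵥ y))) ∂gaussMeasure k := by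
          rw [integral_const_mul, integral_add (hwi.mul_const _) (hti y), integral_mul_const,
            hw1, ← hm]
          ring
      _ ≤ _ := by
          refine integral_mono (((hwi.mul_const _).add (hti y)).const_mul _) (hei y τ) fun ξ => ?_
          have := Real.add_one_le_exp (β * (ξ ⬝ᵥ y) - m)
          calc Real.exp (m - τ) * (w ξ * (1 - m) + w ξ * (β * (ξ ⬝ᵥ y)))
              = w ξ * (Real.exp (m - τ) * (β * (ξ ⬝ᵥ y) - m + 1)) := by ring
            _ ≤ w ξ * (Real.exp (m - τ) * Real.exp (β * (ξ ⬝ᵥ y) - m)) := by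
                have := hw0 ξ
                gcongr
            _ = w ξ * Real.exp (β * (ξ ⬝ᵥ y) - τ) := by
                rw [← Real.exp_add]; ring_nf
  · intro hy
    rw [hay]
    refine (Real.log_le_sub_one_of_pos hpos).trans ?_
    have hsum : Integrable (fun ξ => w ξ + w ξ * (β * (ξ ⬝ᵥ y))) (gaussMeasure k) :=
      hwi.add (hti y)
    have hrem : ∫ ξ, w ξ * Real.exp (β * (ξ ⬝ᵥ y) - τ) ∂gaussMeasure k ≤
        ∫ ξ, (w ξ + w ξ * (β * (ξ ⬝ᵥ y)) + A * (β * k) ^ 2 * ‖y‖ ^ 2 *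
          (‖ξ‖ ^ 2 * Real.exp ((c + β * k) * ‖ξ‖))) ∂gaussMeasure k := by
      refine integral_mono (hei y τ) (hsum.add
        ((integrable_pow_mul_exp_mul_norm_gaussMeasure k 2 _).const_mul _)) fun ξ => ?_
      set t := β * (ξ ⬝ᵥ y) with ht_def
      have h1 : Real.exp (t - τ) ≤ Real.exp t := Real.exp_le_exp.2 (by linarith)
      have h2 := (abs_le.1 (abs_exp_sub_one_sub_le t)).2
      have h3 : |t| ^ 2 * Real.exp |t| ≤
          (β * k * ‖ξ‖ * ‖y‖) ^ 2 * Real.exp (β * k * ‖ξ‖) := by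
        have h4 := ht ξ y
        have h5 : β * k * ‖ξ‖ * ‖y‖ ≤ β * k * ‖ξ‖ :=
          mul_le_of_le_one_right (by positivity) hy
        gcongr
        exact h4.trans h5
      have h6 : w ξ * (|t| ^ 2 * Real.exp |t|) ≤ A * Real.exp (c * ‖ξ‖) *
          ((β * k * ‖ξ‖ * ‖y‖) ^ 2 * Real.exp (β * k * ‖ξ‖)) :=
        mul_le_mul (hwA ξ) h3 (by positivity) (by positivity)
      have h7 : A * Real.exp (c * ‖ξ‖) *
          ((β * k * ‖ξ‖ * ‖y‖) ^ 2 * Real.exp (β * k * ‖ξ‖)) = A * (β * k) ^ 2 * ‖y‖ ^ 2 *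
          (‖ξ‖ ^ 2 * Real.exp ((c + β * k) * ‖ξ‖)) := by
        rw [add_mul c, Real.exp_add]; ring
      have h8 : w ξ * Real.exp (t - τ) ≤ w ξ * (1 + t + |t| ^ 2 * Real.exp |t|) :=
        mul_le_mul_of_nonneg_left (by linarith) (hw0 ξ)
      linarith
    rw [integral_add hsum
        ((integrable_pow_mul_exp_mul_norm_gaussMeasure k 2 _).const_mul _),
      integral_add hwi (hti y), hw1, integral_const_mul, ← hI2] at hrem
    have : 0 ≤ A * (β * k) * I1 * ‖y‖ ^ 2 := by positivity
    linarith

lemma exists_log_heat_expansion (k : ℕ) {M δ : ℝ} (hM : 0 ≤ M) (hδ : 0 < δ) :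
    ∃ K, 0 ≤ K ∧ ∀ h : (Fin k → ℝ) → ℝ, LogLip M h → ∀ x, ∃ a : Fin k → ℝ,
      (∀ y, |a ⬝ᵥ y| ≤ K * ‖y‖) ∧
      ∀ y, |Real.log (heat δ h (x + y)) - Real.log (heat δ h x) - a ⬝ᵥ y| ≤ K * ‖y‖ ^ 2 := by
  set c₀ := ∫ ξ, Real.exp (-(M * √δ) * ‖ξ‖) ∂gaussMeasure k
  have hc₀ : 0 < c₀ := integral_gaussMeasure_pos (integrable_exp_mul_norm_gaussMeasure k _)
    fun ξ => Real.exp_pos _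
  have hs : 0 < √δ := Real.sqrt_pos.2 hδ
  obtain ⟨K, hK, hexp⟩ := exists_log_weighted_integral_expansion k (A := c₀⁻¹) (c := M * √δ)
    (β := 2 * Real.pi / √δ) (by positivity) (by positivity)
  refine ⟨K + M + Real.pi / δ * k, by positivity, fun h hh x => ?_⟩
  have hu := heat_pos hh δ x
  set u := heat δ h x with hu_def
  have hhc := hh.continuous
  obtain ⟨a, ha1, ha2⟩ := hexp (fun ξ => h (x + √δ • ξ) / u) (by fun_prop)
    (fun ξ => div_nonneg (hh.1 _).le hu.le) (fun ξ => by
      rw [div_le_iff₀ hu]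
      have h1 := hh.le_add_smul x ξ √δ
      rw [abs_of_pos hs] at h1
      have h2 : h x ≤ c₀⁻¹ * u := by
        rw [inv_mul_eq_div, le_div_iff₀' hc₀]; exact le_heat hh δ x
      calc h (x + √δ • ξ) ≤ Real.exp (M * √δ * ‖ξ‖) * h x := h1
        _ ≤ Real.exp (M * √δ * ‖ξ‖) * (c₀⁻¹ * u) := by gcongr
        _ = _ := by ring)
    (by rw [integral_div]; exact div_self hu.ne')
  refine ⟨a, fun y => (ha1 y).trans ?_, fun y => ?_⟩
  · refine mul_le_mul_of_nonneg_right ?_ (norm_nonneg y)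
    have : 0 ≤ Real.pi / δ * k := by positivity
    linarith
  set τ := Real.pi / δ * (y ⬝ᵥ y) with hτ_def
  have hyy : 0 ≤ y ⬝ᵥ y := Finset.sum_nonneg fun i _ => mul_self_nonneg _
  have hτ : 0 ≤ τ := by positivity
  have hτ2 : τ ≤ Real.pi / δ * k * ‖y‖ ^ 2 := by
    have := (le_abs_self _).trans (abs_dotProduct_le_card y y)
    calc τ ≤ Real.pi / δ * (k * ‖y‖ * ‖y‖) := by rw [hτ_def]; gcongr
      _ = _ := by ring
  have hW : heat δ h (x + y) / u = ∫ ξ, h (x + √δ • ξ) / u *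
      Real.exp (2 * Real.pi / √δ * (ξ ⬝ᵥ y) - τ) ∂gaussMeasure k := by
    have h1 := integral_gaussMeasure_add_eq (fun ξ => h (x + √δ • ξ)) ((√δ)⁻¹ • y)
    have h2 : ∀ ξ : Fin k → ℝ, x + √δ • (ξ + (√δ)⁻¹ • y) = x + y + √δ • ξ := by
      intro ξ
      rw [smul_add, smul_smul, mul_inv_cancel₀ hs.ne', one_smul]; abel
    simp only [h2] at h1
    rw [show heat δ h (x + y) = ∫ ξ, h (x + y + √δ • ξ) ∂gaussMeasure k from rfl, h1,
      ← integral_div]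
    congr 1
    ext ξ
    rw [div_mul_eq_mul_div]
    congr 4
    · rw [dotProduct_smul, smul_eq_mul]; ring
    · rw [hτ_def, smul_dotProduct, dotProduct_smul, smul_eq_mul, smul_eq_mul]
      have hinv : (√δ)⁻¹ * (√δ)⁻¹ = δ⁻¹ := by rw [← mul_inv, Real.mul_self_sqrt hδ.le]
      linear_combination (Real.pi * (y ⬝ᵥ y)) * hinv
  have hup := heat_pos hh δ (x + y)
  have hWpos := div_pos hup hu
  rw [← Real.log_div hup.ne' hu.ne']
  obtain ⟨hlo, hhi⟩ := ha2 y τ hτ (by rw [← hW]; exact hWpos)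
  rw [← hW] at hlo hhi
  have hyn : 0 ≤ ‖y‖ ^ 2 := by positivity
  have hMy : 0 ≤ M * ‖y‖ ^ 2 := by positivity
  have hKy : 0 ≤ K * ‖y‖ ^ 2 := by positivity
  have hpy : 0 ≤ Real.pi / δ * k * ‖y‖ ^ 2 := by positivity
  rw [add_mul, add_mul, abs_le]
  refine ⟨by linarith, ?_⟩
  rcases le_total ‖y‖ 1 with hy | hy
  · linarith [hhi hy]
  · have h1 := (hh.heat δ).log_sub_log_le (x + y) x
    rw [← Real.log_div hup.ne' hu.ne', add_sub_cancel_left] at h1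
    have h2 := (abs_le.1 (ha1 y)).1
    have h3 : ‖y‖ ≤ ‖y‖ ^ 2 := by nlinarith
    have h4 := mul_le_mul_of_nonneg_left h3 hM
    have h5 := mul_le_mul_of_nonneg_left h3 hK
    linarith

/-- Second order expansion of a Gaussian average of `exp ψ` at a small scale. -/
lemma exists_integral_exp_expansion (k : ℕ) {M K : ℝ} (hM : 0 ≤ M) (hK : 0 ≤ K) :
    ∃ B, 0 ≤ B ∧ ∀ (ψ : (Fin k → ℝ) → ℝ) (a : Fin k → ℝ), Continuous ψ →
      (∀ y, |ψ y| ≤ M * ‖y‖) → (∀ y, |a ⬝ᵥ y| ≤ K * ‖y‖) →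
      (∀ y, |ψ y - a ⬝ᵥ y| ≤ K * ‖y‖ ^ 2) → ∀ ε : ℝ, 0 ≤ ε → ε ≤ 1 →
      |∫ ξ, Real.exp (ψ (ε • ξ)) ∂gaussMeasure k - 1 - ∫ ξ, ψ (ε • ξ) ∂gaussMeasure k
        - gaussVar * (a ⬝ᵥ a) * ε ^ 2 / 2| ≤ B * ε ^ 3 := by
  set I3 := ∫ ξ, ‖ξ‖ ^ 3 * Real.exp (M * ‖ξ‖) ∂gaussMeasure k with hI3
  have hI3n : 0 ≤ I3 := integral_nonneg fun ξ => by positivity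
  refine ⟨(M ^ 3 + K * (M + K)) * I3, by positivity,
    fun ψ a hψ hψM haK hψa ε hε0 hε1 => ?_⟩
  have hn : ∀ ξ : Fin k → ℝ, ‖ε • ξ‖ = ε * ‖ξ‖ := fun ξ => by
    rw [norm_smul, Real.norm_eq_abs, abs_of_nonneg hε0]
  have hle : ∀ ξ : Fin k → ℝ, |ψ (ε • ξ)| ≤ M * ‖ξ‖ := fun ξ => by
    refine (hψM _).trans ?_
    rw [hn]
    exact mul_le_mul_of_nonneg_left (mul_le_of_le_one_left (norm_nonneg _) hε1) hM
  have hi1 : Integrable (fun ξ => ψ (ε • ξ)) (gaussMeasure k) :=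
    integrable_of_abs_le_gaussMeasure (by fun_prop) M 0 1 fun ξ => by simpa using hle ξ
  have hi2 : Integrable (fun ξ => Real.exp (ψ (ε • ξ))) (gaussMeasure k) :=
    integrable_of_abs_le_gaussMeasure (by fun_prop) 1 M 0 fun ξ => by
      rw [Real.abs_exp, pow_zero, one_mul, one_mul, Real.exp_le_exp]
      exact (le_abs_self _).trans (hle ξ)
  have hi3 := (integrable_dotProduct_sq_gaussMeasure a).mul_const (ε ^ 2 / 2)
  have heq : ∫ ξ, Real.exp (ψ (ε • ξ)) ∂gaussMeasure k - 1 - ∫ ξ, ψ (ε • ξ) ∂gaussMeasure k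
        - gaussVar * (a ⬝ᵥ a) * ε ^ 2 / 2 =
      ∫ ξ, (Real.exp (ψ (ε • ξ)) - 1 - ψ (ε • ξ) - (a ⬝ᵥ ξ) ^ 2 * (ε ^ 2 / 2))
        ∂gaussMeasure k := by
    have hs1 : Integrable (fun ξ => Real.exp (ψ (ε • ξ)) - 1) (gaussMeasure k) :=
      hi2.sub (integrable_const 1)
    have hs2 : Integrable (fun ξ => Real.exp (ψ (ε • ξ)) - 1 - ψ (ε • ξ)) (gaussMeasure k) :=
      hs1.sub hi1
    rw [integral_sub hs2 hi3, integral_sub hs1 hi1, integral_sub hi2 (integrable_const 1),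
      integral_mul_const, integral_dotProduct_sq_gaussMeasure]
    simp; ring
  rw [heq]
  calc |∫ ξ, (Real.exp (ψ (ε • ξ)) - 1 - ψ (ε • ξ) - (a ⬝ᵥ ξ) ^ 2 * (ε ^ 2 / 2))
        ∂gaussMeasure k|
      ≤ ∫ ξ, (M ^ 3 + K * (M + K)) * ε ^ 3 * (‖ξ‖ ^ 3 * Real.exp (M * ‖ξ‖))
          ∂gaussMeasure k := by
        rw [← Real.norm_eq_abs]
        refine norm_integral_le_of_norm_le
          ((integrable_pow_mul_exp_mul_norm_gaussMeasure k 3 M).const_mul _)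
          (Filter.Eventually.of_forall fun ξ => ?_)
        rw [Real.norm_eq_abs]
        set p := ψ (ε • ξ) with hp
        have hq : a ⬝ᵥ (ε • ξ) = ε * (a ⬝ᵥ ξ) := by rw [dotProduct_smul, smul_eq_mul]
        set q := a ⬝ᵥ (ε • ξ)
        have h1 := abs_exp_sub_one_sub_sub_le p
        have hpb : |p| ≤ M * (ε * ‖ξ‖) := by rw [← hn]; exact hψM _
        have hqb : |q| ≤ K * (ε * ‖ξ‖) := by rw [← hn]; exact haK _
        have hd : |p - q| ≤ K * (ε * ‖ξ‖) ^ 2 := by rw [← hn]; exact hψa _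
        have hs : |p + q| ≤ (M + K) * (ε * ‖ξ‖) := by
          refine (abs_add_le p q).trans ?_; linarith
        have h2 : |p ^ 2 - q ^ 2| ≤ K * (ε * ‖ξ‖) ^ 2 * ((M + K) * (ε * ‖ξ‖)) := by
          rw [sq_sub_sq, mul_comm, abs_mul]
          exact mul_le_mul hd hs (abs_nonneg _) (by positivity)
        have h3 : |p| ^ 3 * Real.exp |p| ≤ (M * (ε * ‖ξ‖)) ^ 3 * Real.exp (M * ‖ξ‖) := by
          gcongr
          exact hle ξ
        have he : 1 ≤ Real.exp (M * ‖ξ‖) := Real.one_le_exp (by positivity)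
        have h4 : K * (ε * ‖ξ‖) ^ 2 * ((M + K) * (ε * ‖ξ‖)) ≤
            K * (ε * ‖ξ‖) ^ 2 * ((M + K) * (ε * ‖ξ‖)) * Real.exp (M * ‖ξ‖) :=
          le_mul_of_one_le_right (by positivity) he
        have h5 : Real.exp p - 1 - p - (a ⬝ᵥ ξ) ^ 2 * (ε ^ 2 / 2) =
            (Real.exp p - 1 - p - p ^ 2 / 2) + (p ^ 2 - q ^ 2) / 2 := by
          rw [hq]; ring
        rw [h5]
        refine (abs_add_le _ _).trans ?_
        rw [abs_div, abs_two]
        have h6 : 0 ≤ |p ^ 2 - q ^ 2| := abs_nonneg _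
        calc |Real.exp p - 1 - p - p ^ 2 / 2| + |p ^ 2 - q ^ 2| / 2
            ≤ (M * (ε * ‖ξ‖)) ^ 3 * Real.exp (M * ‖ξ‖) +
              K * (ε * ‖ξ‖) ^ 2 * ((M + K) * (ε * ‖ξ‖)) * Real.exp (M * ‖ξ‖) := by linarith
          _ = _ := by ring
    _ = _ := by rw [integral_const_mul, ← hI3]; ring

lemma LogLip.integrable_log {k : ℕ} {M : ℝ} {h : (Fin k → ℝ) → ℝ} (hh : LogLip M h)
    (x : Fin k → ℝ) (s : ℝ) :
    Integrable (fun ξ => Real.log (h (x + s • ξ))) (gaussMeasure k) := by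
  have hc := hh.continuous_log
  have h1 : Integrable (fun ξ => Real.log (h (x + s • ξ)) - Real.log (h x)) (gaussMeasure k) := by
    refine integrable_of_abs_le_gaussMeasure ((hc.comp (by fun_prop)).sub continuous_const)
      (M * |s|) 0 1 fun ξ => ?_
    have := hh.abs_log_sub_log_le (x + s • ξ) x
    rw [add_sub_cancel_left, norm_smul, Real.norm_eq_abs, ← mul_assoc] at this
    simpa using this
  simpa [Pi.add_def] using h1.add (integrable_const (Real.log (h x)))

/-- Averaging `log h` over the compressed Gaussian `Cξ` is at most averaging over the full one,
provided `h` is log-convex along the missing directions. -/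
lemma integral_log_comp_mulVec_le {n l k : ℕ} {M : ℝ} {h : (Fin k → ℝ) → ℝ} (hh : LogLip M h)
    {W : Matrix (Fin k) (Fin k) ℝ} (hW : MidLogConvexAlong W h)
    (C : Matrix (Fin k) (Fin n) ℝ) (D : Matrix (Fin k) (Fin l) ℝ) (hCD : C * Cᵀ + D * Dᵀ = 1)
    (hWD : W * D = 0) (x : Fin k → ℝ) (s : ℝ)
    (hi : Integrable (fun ξ => Real.log (h (x + s • C *ᵥ ξ))) (gaussMeasure n)) :
    ∫ ξ, Real.log (h (x + s • C *ᵥ ξ)) ∂gaussMeasure n ≤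
      ∫ ξ, Real.log (h (x + s • ξ)) ∂gaussMeasure k := by
  obtain ⟨i1, e1⟩ := integral_gaussMeasure_eq_integral_integral C D hCD (hh.integrable_log x s)
  obtain ⟨i2, e2⟩ := integral_gaussMeasure_eq_integral_integral C (-D) (by simpa using hCD)
    (hh.integrable_log x s)
  rw [← integral_prod _ i1] at e1
  rw [← integral_prod _ i2] at e2
  have i3 := hi.comp_fst (gaussMeasure l)
  have e3 : ∫ ξ, Real.log (h (x + s • C *ᵥ ξ)) ∂gaussMeasure n =
      ∫ z, Real.log (h (x + s • C *ᵥ z.1)) ∂((gaussMeasure n).prod (gaussMeasure l)) := by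
    rw [integral_prod _ i3]; simp
  have hmono := integral_mono (i3.add i3) (i1.add i2) fun z => ?_
  · rw [integral_add' i3 i3, integral_add' i1 i2] at hmono
    linarith
  · have h1 := hW (x + s • C *ᵥ z.1) (s • D *ᵥ z.2) (by
      rw [mulVec_smul, mulVec_mulVec, hWD, zero_mulVec, smul_zero])
    have h2 := Real.log_le_log (pow_pos (hh.1 _) 2) h1
    rw [Real.log_pow, Real.log_mul (hh.1 _).ne' (hh.1 _).ne'] at h2
    have h3 : x + s • (C *ᵥ z.1 + D *ᵥ z.2) = x + s • C *ᵥ z.1 + s • D *ᵥ z.2 := by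
      rw [smul_add, add_assoc]
    have h4 : x + s • (C *ᵥ z.1 + (-D) *ᵥ z.2) = x + s • C *ᵥ z.1 - s • D *ᵥ z.2 := by
      rw [neg_mulVec, smul_add, smul_neg, sub_eq_add_neg, add_assoc]
    simp only [Pi.add_apply, h3, h4]
    push_cast at h2
    linarith

lemma exists_integral_exp_sub_one_le (k : ℕ) {M K : ℝ} (hM : 0 ≤ M) (hK : 0 ≤ K) :
    ∃ T, 0 ≤ T ∧ ∀ (ψ : (Fin k → ℝ) → ℝ) (a : Fin k → ℝ), Continuous ψ →
      (∀ y, |ψ y| ≤ M * ‖y‖) → (∀ y, |ψ y - a ⬝ᵥ y| ≤ K * ‖y‖ ^ 2) →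
      ∀ ε : ℝ, 0 ≤ ε → ε ≤ 1 →
      |∫ ξ, Real.exp (ψ (ε • ξ)) ∂gaussMeasure k - 1| ≤ T * ε ^ 2 := by
  set I2 := ∫ ξ, ‖ξ‖ ^ 2 * Real.exp (M * ‖ξ‖) ∂gaussMeasure k with hI2
  have hI2n : 0 ≤ I2 := integral_nonneg fun ξ => by positivity
  refine ⟨(M ^ 2 + K) * I2, by positivity, fun ψ a hψ hψM hψa ε hε0 hε1 => ?_⟩
  have hn : ∀ ξ : Fin k → ℝ, ‖ε • ξ‖ = ε * ‖ξ‖ := fun ξ => by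
    rw [norm_smul, Real.norm_eq_abs, abs_of_nonneg hε0]
  have hle : ∀ ξ : Fin k → ℝ, |ψ (ε • ξ)| ≤ M * ‖ξ‖ := fun ξ => by
    refine (hψM _).trans ?_
    rw [hn]
    exact mul_le_mul_of_nonneg_left (mul_le_of_le_one_left (norm_nonneg _) hε1) hM
  have hi2 : Integrable (fun ξ => Real.exp (ψ (ε • ξ))) (gaussMeasure k) :=
    integrable_of_abs_le_gaussMeasure (by fun_prop) 1 M 0 fun ξ => by
      rw [Real.abs_exp, pow_zero, one_mul, one_mul, Real.exp_le_exp]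
      exact (le_abs_self _).trans (hle ξ)
  have hi3 := (integrable_dotProduct_gaussMeasure a).const_mul ε
  have hs1 : Integrable (fun ξ => Real.exp (ψ (ε • ξ)) - 1) (gaussMeasure k) :=
    hi2.sub (integrable_const 1)
  have heq : ∫ ξ, Real.exp (ψ (ε • ξ)) ∂gaussMeasure k - 1 =
      ∫ ξ, (Real.exp (ψ (ε • ξ)) - 1 - ε * (a ⬝ᵥ ξ)) ∂gaussMeasure k := by
    rw [integral_sub hs1 hi3, integral_sub hi2 (integrable_const 1), integral_const_mul,
      integral_dotProduct_gaussMeasure]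
    simp
  rw [heq]
  calc |∫ ξ, (Real.exp (ψ (ε • ξ)) - 1 - ε * (a ⬝ᵥ ξ)) ∂gaussMeasure k|
      ≤ ∫ ξ, (M ^ 2 + K) * ε ^ 2 * (‖ξ‖ ^ 2 * Real.exp (M * ‖ξ‖)) ∂gaussMeasure k := by
        rw [← Real.norm_eq_abs]
        refine norm_integral_le_of_norm_le
          ((integrable_pow_mul_exp_mul_norm_gaussMeasure k 2 M).const_mul _)
          (Filter.Eventually.of_forall fun ξ => ?_)
        rw [Real.norm_eq_abs]
        have hq : a ⬝ᵥ (ε • ξ) = ε * (a ⬝ᵥ ξ) := by rw [dotProduct_smul, smul_eq_mul]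
        rw [← hq]
        have h1 := abs_exp_sub_one_sub_le (ψ (ε • ξ))
        have hd := hψa (ε • ξ)
        have h0 := hle ξ
        have hpb := hψM (ε • ξ)
        rw [hn] at hd hpb
        generalize ψ (ε • ξ) = q at *
        have h3 : |q| ^ 2 * Real.exp |q| ≤ (M * (ε * ‖ξ‖)) ^ 2 * Real.exp (M * ‖ξ‖) := by
          gcongr
        have he : 1 ≤ Real.exp (M * ‖ξ‖) := Real.one_le_exp (by positivity)
        have h4 : K * (ε * ‖ξ‖) ^ 2 ≤ K * (ε * ‖ξ‖) ^ 2 * Real.exp (M * ‖ξ‖) :=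
          le_mul_of_one_le_right (by positivity) he
        rw [show Real.exp q - 1 - a ⬝ᵥ (ε • ξ) = (Real.exp q - 1 - q) + (q - a ⬝ᵥ (ε • ξ)) by ring]
        refine (abs_add_le _ _).trans ?_
        calc |Real.exp q - 1 - q| + |q - a ⬝ᵥ (ε • ξ)|
            ≤ (M * (ε * ‖ξ‖)) ^ 2 * Real.exp (M * ‖ξ‖) +
              K * (ε * ‖ξ‖) ^ 2 * Real.exp (M * ‖ξ‖) := by linarith
          _ = _ := by ring
    _ = _ := by rw [integral_const_mul, ← hI2]; ring

/-- Expansion of the short-time heat average of a mollified log-Lipschitz function. -/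
lemma exists_log_integral_heat_expansion (k : ℕ) {M δ : ℝ} (hM : 0 ≤ M) (hδ : 0 < δ) :
    ∃ K R, 0 ≤ K ∧ 0 ≤ R ∧ ∀ h : (Fin k → ℝ) → ℝ, LogLip M h → ∀ x, ∃ a : Fin k → ℝ,
      (∀ y, |a ⬝ᵥ y| ≤ K * ‖y‖) ∧
      (∀ y, |Real.log (heat δ h (x + y)) - Real.log (heat δ h x) - a ⬝ᵥ y| ≤ K * ‖y‖ ^ 2) ∧
      ∀ ε : ℝ, 0 ≤ ε → ε ≤ 1 →
        ∫ ξ, (Real.log (heat δ h (x + ε • ξ)) - Real.log (heat δ h x)) ∂gaussMeasure k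
          + gaussVar * (a ⬝ᵥ a) * ε ^ 2 / 2 ≤
        Real.log (∫ ξ, heat δ h (x + ε • ξ) ∂gaussMeasure k) - Real.log (heat δ h x)
          + R * ε ^ 3 := by
  obtain ⟨K, hK, hexp⟩ := exists_log_heat_expansion k hM hδ
  obtain ⟨B, hB, hexpB⟩ := exists_integral_exp_expansion k hM hK
  obtain ⟨T, hT, hexpT⟩ := exists_integral_exp_sub_one_le k hM hK
  set α := ∫ ξ, Real.exp (-M * ‖ξ‖) ∂gaussMeasure k
  have hα : 0 < α := integral_gaussMeasure_pos (integrable_exp_mul_norm_gaussMeasure k _)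
    fun ξ => Real.exp_pos _
  refine ⟨K, B + T ^ 2 / α, hK, by positivity, fun h hh x => ?_⟩
  obtain ⟨a, ha1, ha2⟩ := hexp h hh x
  refine ⟨a, ha1, ha2, fun ε hε0 hε1 => ?_⟩
  have hu := hh.heat δ
  set u := heat δ h
  set ψ : (Fin k → ℝ) → ℝ := fun y => Real.log (u (x + y)) - Real.log (u x) with hψ_def
  have hψc : Continuous ψ :=
    (hu.continuous_log.comp (by fun_prop)).sub continuous_const
  have hψM : ∀ y, |ψ y| ≤ M * ‖y‖ := fun y => by
    simpa using hu.abs_log_sub_log_le (x + y) x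
  have h1 := hexpB ψ a hψc hψM ha1 ha2 ε hε0 hε1
  have h2 := hexpT ψ a hψc hψM ha2 ε hε0 hε1
  have hexpψ : ∀ y, Real.exp (ψ y) = u (x + y) / u x := fun y => by
    rw [hψ_def, Real.exp_sub, Real.exp_log (hu.1 _), Real.exp_log (hu.1 _)]
  have hA : ∫ ξ, Real.exp (ψ (ε • ξ)) ∂gaussMeasure k =
      (∫ ξ, u (x + ε • ξ) ∂gaussMeasure k) / u x := by
    simp only [hexpψ]; rw [integral_div]
  have hi := hu.integrable x ε
  have hJ : 0 < ∫ ξ, u (x + ε • ξ) ∂gaussMeasure k := integral_gaussMeasure_pos hi fun _ => hu.1 _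
  have hαA : α ≤ ∫ ξ, Real.exp (ψ (ε • ξ)) ∂gaussMeasure k := by
    rw [hA, ← integral_div]
    refine integral_mono (integrable_exp_mul_norm_gaussMeasure k _) (hi.div_const _) fun ξ => ?_
    simp only
    rw [← hexpψ, Real.exp_le_exp]
    have h3 := (abs_le.1 (hψM (ε • ξ))).1
    have h4 : ‖ε • ξ‖ ≤ ‖ξ‖ := by
      rw [norm_smul, Real.norm_eq_abs, abs_of_nonneg hε0]
      exact mul_le_of_le_one_left (norm_nonneg _) hε1
    have := mul_le_mul_of_nonneg_left h4 hM
    linarith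
  rw [← Real.log_div hJ.ne' (hu.1 x).ne', ← hA]
  set A := ∫ ξ, Real.exp (ψ (ε • ξ)) ∂gaussMeasure k
  have hApos := hα.trans_le hαA
  have h5 : A - 1 - T ^ 2 / α * ε ^ 3 ≤ Real.log A := by
    refine le_trans ?_ (Real.one_sub_inv_le_log_of_pos hApos)
    have h6 : (A - 1) ^ 2 ≤ T ^ 2 * ε ^ 3 := by
      calc (A - 1) ^ 2 = |A - 1| ^ 2 := (sq_abs _).symm
        _ ≤ (T * ε ^ 2) ^ 2 := pow_le_pow_left₀ (abs_nonneg _) h2 2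
        _ = T ^ 2 * ε ^ 3 * ε := by ring
        _ ≤ T ^ 2 * ε ^ 3 := mul_le_of_le_one_right (by positivity) hε1
    have h7 : (A - 1) ^ 2 / A ≤ T ^ 2 / α * ε ^ 3 := by
      rw [div_mul_eq_mul_div]
      exact div_le_div₀ (by positivity) h6 hα hαA
    have h8 : (A - 1) ^ 2 / A = A - 1 - (1 - A⁻¹) := by
      field_simp
    linarith
  have h9 := (abs_le.1 h1).1
  rw [add_mul]
  linarith

lemma dotProduct_self_sum_le {n m : ℕ} {ni : Fin m → ℕ} {C : ∀ j, Matrix (Fin (ni j)) (Fin n) ℝ}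
    {p : Fin m → ℝ} (hp : ∀ j, 0 ≤ p j) (hC : ∑ j, p j • ((C j)ᵀ * C j) = 1)
    (a : ∀ j, Fin (ni j) → ℝ) :
    (∑ j, p j • (C j)ᵀ *ᵥ a j) ⬝ᵥ (∑ j, p j • (C j)ᵀ *ᵥ a j) ≤ ∑ j, p j * (a j ⬝ᵥ a j) := by
  set b := ∑ j, p j • (C j)ᵀ *ᵥ a j with hb
  have h1 : b ⬝ᵥ b = ∑ j, p j * (a j ⬝ᵥ C j *ᵥ b) := by
    nth_rw 1 [hb]
    rw [sum_dotProduct]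
    refine Finset.sum_congr rfl fun j _ => ?_
    rw [smul_dotProduct, smul_eq_mul, mulVec_transpose, dotProduct_mulVec]
  have h2 : b ⬝ᵥ b = ∑ j, p j * (C j *ᵥ b ⬝ᵥ C j *ᵥ b) := by
    have : b = ∑ j, p j • (C j)ᵀ *ᵥ (C j *ᵥ b) := by
      conv_lhs => rw [← one_mulVec b, ← hC, sum_mulVec]
      refine Finset.sum_congr rfl fun j _ => ?_
      rw [smul_mulVec, mulVec_mulVec]
    conv_lhs => lhs; rw [this]
    rw [sum_dotProduct]
    refine Finset.sum_congr rfl fun j _ => ?_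
    rw [smul_dotProduct, smul_eq_mul, mulVec_transpose, dotProduct_mulVec]
  have h3 : 0 ≤ ∑ j, p j * ((a j - C j *ᵥ b) ⬝ᵥ (a j - C j *ᵥ b)) :=
    Finset.sum_nonneg fun j _ => mul_nonneg (hp j) (Finset.sum_nonneg fun i _ => mul_self_nonneg _)
  have h4 : ∑ j, p j * ((a j - C j *ᵥ b) ⬝ᵥ (a j - C j *ᵥ b)) =
      ∑ j, p j * (a j ⬝ᵥ a j) - 2 * (∑ j, p j * (a j ⬝ᵥ C j *ᵥ b)) +
        ∑ j, p j * (C j *ᵥ b ⬝ᵥ C j *ᵥ b) := by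
    rw [Finset.mul_sum, ← Finset.sum_sub_distrib, ← Finset.sum_add_distrib]
    refine Finset.sum_congr rfl fun j _ => ?_
    rw [sub_dotProduct, dotProduct_sub, dotProduct_sub, dotProduct_comm (C j *ᵥ b) (a j)]
    ring
  rw [h4, ← h1, ← h2] at h3
  linarith

lemma exists_norm_mulVec_le {k n : ℕ} (C : Matrix (Fin k) (Fin n) ℝ) :
    ∃ c, 0 ≤ c ∧ ∀ x, ‖C *ᵥ x‖ ≤ c * ‖x‖ :=
  ⟨‖C.mulVecLin.toContinuousLinearMap‖, norm_nonneg _,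
    C.mulVecLin.toContinuousLinearMap.le_opNorm⟩

section Datum

variable {n m : ℕ} {ni : Fin m → ℕ} {C : ∀ j, Matrix (Fin (ni j)) (Fin n) ℝ} {p : Fin m → ℝ}

lemma prod_rpow_pos {u : ∀ j, (Fin (ni j) → ℝ) → ℝ} (hu : ∀ j y, 0 < u j y) (x : Fin n → ℝ) :
    0 < ∏ j, u j (C j *ᵥ x) ^ p j :=
  Finset.prod_pos fun j _ => Real.rpow_pos_of_pos (hu j _) _

lemma log_prod_rpow {r : Fin m → ℝ} (hr : ∀ j, 0 < r j) :
    Real.log (∏ j, r j ^ p j) = ∑ j, p j * Real.log (r j) := by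
  rw [Real.log_prod fun j _ => (Real.rpow_pos_of_pos (hr j) _).ne']
  exact Finset.sum_congr rfl fun j _ => Real.log_rpow (hr j) _

lemma LogLip.prod_rpow {M : ℝ} (hM : 0 ≤ M) (hp : ∀ j, 0 ≤ p j) {c : Fin m → ℝ}
    (hc : ∀ j x, ‖C j *ᵥ x‖ ≤ c j * ‖x‖) {u : ∀ j, (Fin (ni j) → ℝ) → ℝ}
    (hu : ∀ j, LogLip M (u j)) :
    LogLip (∑ j, p j * (M * c j)) fun x => ∏ j, u j (C j *ᵥ x) ^ p j := by
  refine logLip_of_abs_log_sub_log_le (prod_rpow_pos fun j => (hu j).1) fun x y => ?_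
  rw [log_prod_rpow fun j => (hu j).1 _, log_prod_rpow fun j => (hu j).1 _,
    ← Finset.sum_sub_distrib, Finset.sum_mul]
  refine Finset.sum_le_sum fun j _ => ?_
  rw [← mul_sub, mul_assoc]
  refine mul_le_mul_of_nonneg_left (((hu j).log_sub_log_le _ _).trans ?_) (hp j)
  rw [← mulVec_sub, mul_assoc]
  exact mul_le_mul_of_nonneg_left (hc j _) hM

/-- Short-time comparison between flowing the product and flowing each factor, with an error of
order `ε³ = t ^ (3 / 2)`. -/
lemma exists_integral_prod_heat_le (hp : ∀ j, 0 ≤ p j) (hC : ∑ j, p j • ((C j)ᵀ * C j) = 1)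
    {l : Fin m → ℕ} {D : ∀ j, Matrix (Fin (ni j)) (Fin (l j)) ℝ}
    (hCD : ∀ j, C j * (C j)ᵀ + D j * (D j)ᵀ = 1)
    {W : ∀ j, Matrix (Fin (ni j)) (Fin (ni j)) ℝ} (hWD : ∀ j, W j * D j = 0)
    {M δ : ℝ} (hM : 0 ≤ M) (hδ : 0 < δ) :
    ∃ B, 0 ≤ B ∧ ∀ h : ∀ j, (Fin (ni j) → ℝ) → ℝ, (∀ j, LogLip M (h j)) →
      (∀ j, MidLogConvexAlong (W j) (h j)) → ∀ x (ε : ℝ), 0 ≤ ε → ε ≤ 1 →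
      ∫ ξ, ∏ j, heat δ (h j) (C j *ᵥ (x + ε • ξ)) ^ p j ∂gaussMeasure n ≤
        Real.exp (B * ε ^ 3) *
          ∏ j, (∫ ξ, heat δ (h j) (C j *ᵥ x + ε • ξ) ∂gaussMeasure (ni j)) ^ p j := by
  choose c hc0 hc using fun j => exists_norm_mulVec_le (C j)
  choose K R hK hR hexp using fun j => exists_log_integral_heat_expansion (ni j) hM hδ
  have hM' : 0 ≤ ∑ j, p j * (M * c j) := Finset.sum_nonneg fun j _ => by
    have := hp j; have := hc0 j; positivity
  have hK1 : 0 ≤ ∑ j, p j * (K j * c j) := Finset.sum_nonneg fun j _ => by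
    have := hp j; have := hc0 j; have := hK j; positivity
  have hK2 : 0 ≤ ∑ j, p j * (K j * c j ^ 2) := Finset.sum_nonneg fun j _ => by
    have := hp j; have := hc0 j; have := hK j; positivity
  obtain ⟨B, hB, hexpB⟩ := exists_integral_exp_expansion n hM' (add_nonneg hK1 hK2)
  refine ⟨B + ∑ j, p j * R j,
    add_nonneg hB (Finset.sum_nonneg fun j _ => mul_nonneg (hp j) (hR j)),
    fun h hh hW x ε hε0 hε1 => ?_⟩
  choose a ha1 ha2 ha3 using fun j => hexp j (h j) (hh j) (C j *ᵥ x)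
  have hu : ∀ j, LogLip M (heat δ (h j)) := fun j => (hh j).heat δ
  have hWu : ∀ j, MidLogConvexAlong (W j) (heat δ (h j)) := fun j => (hW j).heat (hh j) δ
  set u := fun j => heat δ (h j)
  set ψ : ∀ j, (Fin (ni j) → ℝ) → ℝ :=
    fun j y => Real.log (u j (C j *ᵥ x + y)) - Real.log (u j (C j *ᵥ x)) with hψ
  have hψM : ∀ j y, |ψ j y| ≤ M * ‖y‖ := fun j y => by
    simpa using (hu j).abs_log_sub_log_le (C j *ᵥ x + y) (C j *ᵥ x)
  have hψc : ∀ j, Continuous (ψ j) := fun j =>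
    ((hu j).continuous_log.comp (by fun_prop)).sub continuous_const
  set b := ∑ j, p j • (C j)ᵀ *ᵥ a j with hb
  have hby : ∀ y, b ⬝ᵥ y = ∑ j, p j * (a j ⬝ᵥ C j *ᵥ y) := fun y => by
    rw [hb, sum_dotProduct]
    refine Finset.sum_congr rfl fun j _ => ?_
    rw [smul_dotProduct, smul_eq_mul, mulVec_transpose, dotProduct_mulVec]
  have hmul : ∀ (r : ℝ) (j : Fin m) (y : Fin n → ℝ), 0 ≤ r → r * ‖C j *ᵥ y‖ ≤ r * (c j * ‖y‖) :=
    fun r j y hr => mul_le_mul_of_nonneg_left (hc j y) hr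
  have hsum : ∀ (F G : Fin m → ℝ), (∀ j, |F j| ≤ G j) →
      |∑ j, p j * F j| ≤ ∑ j, p j * G j := fun F G hFG => by
    refine (Finset.abs_sum_le_sum_abs _ _).trans (Finset.sum_le_sum fun j _ => ?_)
    rw [abs_mul, abs_of_nonneg (hp j)]
    exact mul_le_mul_of_nonneg_left (hFG j) (hp j)
  have hmain := hexpB (fun y => ∑ j, p j * ψ j (C j *ᵥ y)) b
    (continuous_finsetSum _ fun j _ => continuous_const.mul ((hψc j).comp (by fun_prop)))
    (fun y => by
      refine (hsum _ (fun j => M * c j * ‖y‖) fun j => ?_).trans_eq ?_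
      · refine (hψM j _).trans ((hmul M j y hM).trans_eq (by ring))
      · rw [Finset.sum_mul]; exact Finset.sum_congr rfl fun j _ => by ring)
    (fun y => by
      rw [hby]
      refine (hsum _ (fun j => K j * c j * ‖y‖) fun j => ?_).trans ?_
      · refine (ha1 j _).trans ((hmul _ j y (hK j)).trans_eq (by ring))
      · rw [add_mul]
        refine le_add_of_le_of_nonneg (le_of_eq ?_) (by positivity)
        rw [Finset.sum_mul]; exact Finset.sum_congr rfl fun j _ => by ring)
    (fun y => by
      rw [hby, ← Finset.sum_sub_distrib]
      simp only [← mul_sub]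
      refine (hsum _ (fun j => K j * c j ^ 2 * ‖y‖ ^ 2) fun j => ?_).trans ?_
      · refine (ha2 j _).trans ?_
        calc K j * ‖C j *ᵥ y‖ ^ 2 ≤ K j * (c j * ‖y‖) ^ 2 :=
              mul_le_mul_of_nonneg_left (pow_le_pow_left₀ (norm_nonneg _) (hc j y) 2) (hK j)
          _ = _ := by ring
      · rw [add_mul]
        refine le_add_of_nonneg_of_le (by positivity) (le_of_eq ?_)
        rw [Finset.sum_mul]; exact Finset.sum_congr rfl fun j _ => by ring)
    ε hε0 hε1
  have hCs : ∀ j (ξ : Fin n → ℝ), C j *ᵥ (ε • ξ) = ε • C j *ᵥ ξ := fun j ξ => mulVec_smul _ _ _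
  have hiC : ∀ j, Integrable (fun ξ => ψ j (ε • C j *ᵥ ξ)) (gaussMeasure n) := fun j =>
    integrable_of_abs_le_gaussMeasure ((hψc j).comp (by fun_prop)) (M * (ε * c j)) 0 1 fun ξ => by
      refine (hψM j _).trans ?_
      rw [norm_smul, Real.norm_eq_abs, abs_of_nonneg hε0]
      have := hmul (M * ε) j ξ (by positivity)
      simp only [pow_one, zero_mul, Real.exp_zero, mul_one]
      linarith
  have hJ : ∀ j, ∫ ξ, ψ j (ε • C j *ᵥ ξ) ∂gaussMeasure n ≤
      ∫ ξ, ψ j (ε • ξ) ∂gaussMeasure (ni j) := fun j => by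
    have hi : Integrable (fun ξ => Real.log (u j (C j *ᵥ x + ε • C j *ᵥ ξ))) (gaussMeasure n) := by
      simpa [hψ, Pi.add_def] using
        (hiC j).add (integrable_const (Real.log (u j (C j *ᵥ x))))
    have := integral_log_comp_mulVec_le (hu j) (hWu j) (C j) (D j) (hCD j) (hWD j) (C j *ᵥ x) ε hi
    simp only [hψ]
    rw [integral_sub hi (integrable_const _),
      integral_sub ((hu j).integrable_log _ _) (integrable_const _)]
    simpa using this
  have hE : ∫ ξ, ∑ j, p j * ψ j (C j *ᵥ (ε • ξ)) ∂gaussMeasure n ≤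
      ∑ j, p j * ∫ ξ, ψ j (ε • ξ) ∂gaussMeasure (ni j) := by
    simp only [hCs]
    rw [integral_finsetSum _ fun j _ => (hiC j).const_mul _]
    refine Finset.sum_le_sum fun j _ => ?_
    rw [integral_const_mul]
    exact mul_le_mul_of_nonneg_left (hJ j) (hp j)
  have hbb := dotProduct_self_sum_le hp hC a
  rw [← hb] at hbb
  set v : Fin m → ℝ := fun j => u j (C j *ᵥ x) with hv
  have hvpos : ∀ j, 0 < v j := fun j => (hu j).1 _
  set I : Fin m → ℝ := fun j => ∫ ξ, u j (C j *ᵥ x + ε • ξ) ∂gaussMeasure (ni j) with hI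
  have hIpos : ∀ j, 0 < I j := fun j =>
    integral_gaussMeasure_pos ((hu j).integrable _ _) fun _ => (hu j).1 _
  have hstep : ∑ j, p j * (∫ ξ, ψ j (ε • ξ) ∂gaussMeasure (ni j)) +
      gaussVar * (∑ j, p j * (a j ⬝ᵥ a j)) * ε ^ 2 / 2 ≤
      (∑ j, p j * Real.log (I j)) - (∑ j, p j * Real.log (v j)) + (∑ j, p j * R j) * ε ^ 3 := by
    have h1 : ∑ j, p j * (∫ ξ, ψ j (ε • ξ) ∂gaussMeasure (ni j) +
        gaussVar * (a j ⬝ᵥ a j) * ε ^ 2 / 2) ≤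
        ∑ j, p j * (Real.log (I j) - Real.log (v j) + R j * ε ^ 3) :=
      Finset.sum_le_sum fun j _ => mul_le_mul_of_nonneg_left (ha3 j ε hε0 hε1) (hp j)
    simp only [mul_add, mul_sub, Finset.sum_add_distrib, Finset.sum_sub_distrib] at h1
    have h2 : ∑ j, p j * (gaussVar * (a j ⬝ᵥ a j) * ε ^ 2 / 2) =
        gaussVar * (∑ j, p j * (a j ⬝ᵥ a j)) * ε ^ 2 / 2 := by
      rw [Finset.mul_sum, Finset.sum_mul, Finset.sum_div]
      exact Finset.sum_congr rfl fun j _ => by ring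
    have h3 : ∑ j, p j * (R j * ε ^ 3) = (∑ j, p j * R j) * ε ^ 3 := by
      rw [Finset.sum_mul]
      exact Finset.sum_congr rfl fun j _ => by ring
    rwa [h2, h3] at h1
  have hexpΨ : ∀ ξ, ∏ j, u j (C j *ᵥ (x + ε • ξ)) ^ p j =
      (∏ j, v j ^ p j) * Real.exp (∑ j, p j * ψ j (C j *ᵥ (ε • ξ))) := fun ξ => by
    rw [Real.exp_sum, ← Finset.prod_mul_distrib]
    refine Finset.prod_congr rfl fun j _ => ?_
    rw [mul_comm (p j), Real.exp_mul]
    simp only [hψ]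
    rw [mulVec_add, ← Real.log_div ((hu j).1 _).ne'
      ((hu j).1 _).ne', Real.exp_log (div_pos ((hu j).1 _) ((hu j).1 _)),
      ← Real.mul_rpow (hvpos j).le (div_pos ((hu j).1 _) ((hu j).1 _)).le,
      mul_div_cancel₀ _ (hvpos j).ne']
  have hprodv : ∏ j, v j ^ p j = Real.exp (∑ j, p j * Real.log (v j)) := by
    rw [← log_prod_rpow hvpos,
      Real.exp_log (Finset.prod_pos fun j _ => Real.rpow_pos_of_pos (hvpos j) _)]
  have hprodI : ∏ j, I j ^ p j = Real.exp (∑ j, p j * Real.log (I j)) := by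
    rw [← log_prod_rpow hIpos,
      Real.exp_log (Finset.prod_pos fun j _ => Real.rpow_pos_of_pos (hIpos j) _)]
  change ∫ ξ, ∏ j, u j (C j *ᵥ (x + ε • ξ)) ^ p j ∂gaussMeasure n ≤ _ * ∏ j, I j ^ p j
  simp only [hexpΨ]
  rw [integral_const_mul, hprodI, hprodv, ← Real.exp_add]
  have hgb : gaussVar * (b ⬝ᵥ b) * ε ^ 2 / 2 ≤
      gaussVar * (∑ j, p j * (a j ⬝ᵥ a j)) * ε ^ 2 / 2 := by
    have := gaussVar_nonneg
    gcongr
  have hL := (abs_le.1 hmain).2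
  set L := ∫ ξ, Real.exp (∑ j, p j * ψ j (C j *ᵥ (ε • ξ))) ∂gaussMeasure n
  set S := ∑ j, p j * R j
  have hL2 : L ≤ Real.exp ((∑ j, p j * Real.log (I j)) - (∑ j, p j * Real.log (v j)) +
      (B + S) * ε ^ 3) := by
    refine le_trans ?_ (Real.add_one_le_exp _)
    linarith
  calc Real.exp (∑ j, p j * Real.log (v j)) * L
      ≤ Real.exp (∑ j, p j * Real.log (v j)) * _ :=
        mul_le_mul_of_nonneg_left hL2 (Real.exp_pos _).le
    _ = _ := by rw [← Real.exp_add]; congr 1; ring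

end Datum

lemma continuousAt_integral_exp_mul_norm_gaussMeasure (k : ℕ) :
    ContinuousAt (fun c : ℝ => ∫ ξ, Real.exp (c * ‖ξ‖) ∂gaussMeasure k) 0 := by
  refine continuousAt_of_dominated (bound := fun ξ => Real.exp (1 * ‖ξ‖))
    (Filter.Eventually.of_forall fun c => by fun_prop) ?_
    (integrable_exp_mul_norm_gaussMeasure k 1)
    (Filter.Eventually.of_forall fun ξ => by fun_prop)
  filter_upwards [Iic_mem_nhds (zero_lt_one' ℝ)] with c hc
  refine Filter.Eventually.of_forall fun ξ => ?_
  rw [Real.norm_eq_abs, Real.abs_exp, Real.exp_le_exp]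
  exact mul_le_mul_of_nonneg_right hc (norm_nonneg ξ)

lemma heat_mono {k : ℕ} {M M' : ℝ} {g h : (Fin k → ℝ) → ℝ} (hg : LogLip M g) (hh : LogLip M' h)
    (hle : ∀ x, g x ≤ h x) (t : ℝ) (x : Fin k → ℝ) : heat t g x ≤ heat t h x :=
  integral_mono (hg.integrable x _) (hh.integrable x _) fun _ => hle _

lemma LogLip.const_mul {k : ℕ} {M c : ℝ} {h : (Fin k → ℝ) → ℝ} (hh : LogLip M h) (hc : 0 < c) :
    LogLip M fun x => c * h x := by
  refine ⟨fun x => mul_pos hc (hh.1 x), fun x y => ?_⟩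
  have := mul_le_mul_of_nonneg_left (hh.2 x y) hc.le
  linarith

section Datum

variable {n m : ℕ} {ni : Fin m → ℕ} {C : ∀ j, Matrix (Fin (ni j)) (Fin n) ℝ} {p : Fin m → ℝ}
  {l : Fin m → ℕ} {D : ∀ j, Matrix (Fin (ni j)) (Fin (l j)) ℝ}
  {W : ∀ j, Matrix (Fin (ni j)) (Fin (ni j)) ℝ}

/-- Comparison along the heat flow run for unit time, for mollified data. -/
lemma integral_prod_heat_le (hp : ∀ j, 0 ≤ p j) (hC : ∑ j, p j • ((C j)ᵀ * C j) = 1)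
    (hCD : ∀ j, C j * (C j)ᵀ + D j * (D j)ᵀ = 1) (hWD : ∀ j, W j * D j = 0)
    {M δ : ℝ} (hM : 0 ≤ M) (hδ : 0 < δ) {h : ∀ j, (Fin (ni j) → ℝ) → ℝ}
    (hh : ∀ j, LogLip M (h j)) (hW : ∀ j, MidLogConvexAlong (W j) (h j)) :
    ∫ ξ, ∏ j, heat δ (h j) (C j *ᵥ ξ) ^ p j ∂gaussMeasure n ≤
      ∏ j, heat (δ + 1) (h j) 0 ^ p j := by
  obtain ⟨B, hB, hstep⟩ := exists_integral_prod_heat_le hp hC hCD hWD hM hδ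
  choose c hc0 hc using fun j => exists_norm_mulVec_le (C j)
  set G : ℝ → (Fin n → ℝ) → ℝ := fun s x => ∏ j, heat (δ + (1 - s)) (h j) (C j *ᵥ x) ^ p j with hG
  have hGL : ∀ s, LogLip (∑ j, p j * (M * c j)) (G s) := fun s =>
    LogLip.prod_rpow hM hp hc fun j => (hh j).heat _
  have hflow : ∀ s η : ℝ, 0 ≤ s → 0 ≤ η → η ≤ 1 → s + η ≤ 1 →
      heat (s + η) (G (s + η)) 0 ≤ Real.exp (B * √η ^ 3) * heat s (G s) 0 := by
    intro s η hs hη hη1 hsη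
    rw [← heat_heat (hGL _) hs hη]
    have hpt : ∀ x, heat η (G (s + η)) x ≤ Real.exp (B * √η ^ 3) * G s x := by
      intro x
      have h1 := hstep (fun j => heat (1 - (s + η)) (h j)) (fun j => (hh j).heat _)
        (fun j => (hW j).heat (hh j) _) x √η (Real.sqrt_nonneg _) (Real.sqrt_le_one.2 hη1)
      have h2 : ∀ j, heat δ (heat (1 - (s + η)) (h j)) = heat (δ + (1 - (s + η))) (h j) :=
        fun j => heat_heat (hh j) hδ.le (by linarith)
      have h3 : ∀ j, ∫ ξ, heat (δ + (1 - (s + η))) (h j) (C j *ᵥ x + √η • ξ)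
          ∂gaussMeasure (ni j) = heat (δ + (1 - s)) (h j) (C j *ᵥ x) := fun j => by
        change heat η (heat (δ + (1 - (s + η))) (h j)) (C j *ᵥ x) = _
        rw [heat_heat (hh j) hη (by linarith)]
        congr 1; ring
      simp only [h2, h3] at h1
      exact h1
    refine (heat_mono ((hGL _).heat η) ((hGL s).const_mul (Real.exp_pos _)) hpt s 0).trans_eq ?_
    exact integral_const_mul _ _
  have hiter : ∀ N : ℕ, ∀ k : ℕ, k ≤ N + 1 →
      heat (k * (1 / ((N : ℝ) + 1))) (G (k * (1 / ((N : ℝ) + 1)))) 0 ≤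
        Real.exp (k * (B * √(1 / ((N : ℝ) + 1)) ^ 3)) * heat 0 (G 0) 0 := by
    intro N k
    induction k with
    | zero => intro _; simp
    | succ k ih =>
      intro hk
      have hN : (0 : ℝ) < (N : ℝ) + 1 := by positivity
      have h1 : (1 : ℝ) / ((N : ℝ) + 1) ≤ 1 := by
        rw [div_le_one hN]; linarith [Nat.cast_nonneg (α := ℝ) N]
      have h2 : (k : ℝ) * (1 / ((N : ℝ) + 1)) + 1 / ((N : ℝ) + 1) ≤ 1 := by
        rw [← add_one_mul, mul_one_div, div_le_one hN]; exact_mod_cast hk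
      have h3 := hflow (k * (1 / ((N : ℝ) + 1))) (1 / ((N : ℝ) + 1)) (by positivity)
        (by positivity) h1 h2
      have h4 := mul_le_mul_of_nonneg_left (ih (by omega))
        (Real.exp_pos (B * √(1 / ((N : ℝ) + 1)) ^ 3)).le
      rw [← mul_assoc, ← Real.exp_add] at h4
      push_cast
      rw [add_one_mul, add_one_mul, add_comm (_ * (B * _))]
      exact h3.trans h4
  have hlim : heat 1 (G 1) 0 ≤ heat 0 (G 0) 0 := by
    have h1 : ∀ N : ℕ, heat 1 (G 1) 0 ≤
        Real.exp (B * √(1 / ((N : ℝ) + 1))) * heat 0 (G 0) 0 := by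
      intro N
      have h2 := hiter N (N + 1) le_rfl
      have hN : (0 : ℝ) < (N : ℝ) + 1 := by positivity
      push_cast at h2
      rw [mul_one_div_cancel hN.ne'] at h2
      convert h2 using 3
      have h3 := Real.mul_self_sqrt (show 0 ≤ 1 / ((N : ℝ) + 1) by positivity)
      have h4 : ((N : ℝ) + 1) * (1 / ((N : ℝ) + 1)) = 1 := mul_one_div_cancel hN.ne'
      set r := √(1 / ((N : ℝ) + 1))
      calc B * r = B * r * (((N : ℝ) + 1) * (1 / ((N : ℝ) + 1))) := by rw [h4, mul_one]
        _ = B * r * (((N : ℝ) + 1) * (r * r)) := by rw [h3]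
        _ = _ := by ring
    have h2 : Filter.Tendsto (fun N : ℕ => Real.exp (B * √(1 / ((N : ℝ) + 1))) * heat 0 (G 0) 0)
        Filter.atTop (nhds (Real.exp (B * √0) * heat 0 (G 0) 0)) := by
      have h0 := tendsto_one_div_add_atTop_nhds_zero_nat (𝕜 := ℝ)
      have hcont : Continuous fun t : ℝ => Real.exp (B * √t) * heat 0 (G 0) 0 := by fun_prop
      exact (hcont.tendsto 0).comp h0
    simpa using ge_of_tendsto' h2 h1
  have e1 : heat 1 (G 1) 0 = ∫ ξ, ∏ j, heat δ (h j) (C j *ᵥ ξ) ^ p j ∂gaussMeasure n := by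
    simp [heat, hG]
  have e0 : heat 0 (G 0) 0 = ∏ j, heat (δ + 1) (h j) 0 ^ p j := by
    change ∫ ξ, G 0 (0 + √0 • ξ) ∂gaussMeasure n = _
    simp [hG]
  rwa [e1, e0] at hlim

/-- The Gaussian form of the inequality for log-Lipschitz inputs. -/
lemma integral_prod_gaussMeasure_le (hp : ∀ j, 0 ≤ p j) (hC : ∑ j, p j • ((C j)ᵀ * C j) = 1)
    (hCD : ∀ j, C j * (C j)ᵀ + D j * (D j)ᵀ = 1) (hWD : ∀ j, W j * D j = 0)
    {M : ℝ} (hM : 0 ≤ M) {h : ∀ j, (Fin (ni j) → ℝ) → ℝ}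
    (hh : ∀ j, LogLip M (h j)) (hW : ∀ j, MidLogConvexAlong (W j) (h j)) :
    ∫ ξ, ∏ j, h j (C j *ᵥ ξ) ^ p j ∂gaussMeasure n ≤
      ∏ j, (∫ ξ, h j ξ ∂gaussMeasure (ni j)) ^ p j := by
  choose c hc0 hc using fun j => exists_norm_mulVec_le (C j)
  set g : ℕ → ℝ → ℝ := fun k c => ∫ ξ, Real.exp (c * ‖ξ‖) ∂gaussMeasure k with hg
  have hgpos : ∀ k c, 0 < g k c := fun k c =>
    integral_gaussMeasure_pos (integrable_exp_mul_norm_gaussMeasure k c) fun _ => Real.exp_pos _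
  have hheat1 : ∀ j, heat 1 (h j) 0 = ∫ ξ, h j ξ ∂gaussMeasure (ni j) := fun j => by simp [heat]
  have hI : Integrable (fun ξ => ∏ j, h j (C j *ᵥ ξ) ^ p j) (gaussMeasure n) := by
    simpa using (LogLip.prod_rpow hM hp hc hh).integrable 0 1
  have hIδ : ∀ δ, Integrable (fun ξ => ∏ j, heat δ (h j) (C j *ᵥ ξ) ^ p j) (gaussMeasure n) := by
    intro δ
    simpa using (LogLip.prod_rpow hM hp hc fun j => (hh j).heat δ).integrable 0 1
  have hkey : ∀ t : ℝ, 0 < t → (∏ j, g (ni j) (-(M * t)) ^ p j) *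
      ∫ ξ, ∏ j, h j (C j *ᵥ ξ) ^ p j ∂gaussMeasure n ≤
      ∏ j, (g (ni j) (M * t) * ∫ ξ, h j ξ ∂gaussMeasure (ni j)) ^ p j := by
    intro t ht
    have hsq : √(t ^ 2) = t := Real.sqrt_sq ht.le
    have h1 := integral_prod_heat_le hp hC hCD hWD hM (pow_pos ht 2) hh hW
    refine le_trans ?_ (h1.trans ?_)
    · rw [← integral_const_mul]
      refine integral_mono (hI.const_mul _) (hIδ _) fun ξ => ?_
      simp only
      rw [← Finset.prod_mul_distrib]
      refine Finset.prod_le_prod (fun j _ => ?_) fun j _ => ?_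
      · have := hgpos (ni j) (-(M * t)); have := (hh j).1 (C j *ᵥ ξ); positivity
      · rw [← Real.mul_rpow (hgpos _ _).le ((hh j).1 _).le]
        have h2 := le_heat (hh j) (t ^ 2) (C j *ᵥ ξ)
        rw [hsq] at h2
        exact Real.rpow_le_rpow (mul_pos (hgpos _ _) ((hh j).1 _)).le h2 (hp j)
    · refine Finset.prod_le_prod (fun j _ => Real.rpow_nonneg (heat_pos (hh j) _ _).le _)
        fun j _ => Real.rpow_le_rpow (heat_pos (hh j) _ _).le ?_ (hp j)
      rw [← heat_heat (hh j) (sq_nonneg t) zero_le_one, ← hheat1]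
      have h2 := heat_le ((hh j).heat 1) (t ^ 2) 0
      rwa [hsq] at h2
  have hg0 : ∀ k, g k 0 = 1 := fun k => by simp [hg]
  have hgc : ∀ k, Filter.Tendsto (g k) (nhds 0) (nhds 1) := fun k => by
    have := (continuousAt_integral_exp_mul_norm_gaussMeasure k).tendsto
    rwa [show (∫ ξ, Real.exp (0 * ‖ξ‖) ∂gaussMeasure k) = 1 from hg0 k] at this
  have ht : ∀ r : ℝ, Filter.Tendsto (fun t : ℝ => r * t) (nhdsWithin 0 (Set.Ioi 0)) (nhds 0) :=
    fun r => by
      have : Filter.Tendsto (fun t : ℝ => r * t) (nhds 0) (nhds (r * 0)) :=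
        (continuous_const_mul r).tendsto 0
      rw [mul_zero] at this
      exact this.mono_left nhdsWithin_le_nhds
  refine le_of_tendsto_of_tendsto (f := fun t : ℝ => (∏ j, g (ni j) (-M * t) ^ p j) *
      ∫ ξ, ∏ j, h j (C j *ᵥ ξ) ^ p j ∂gaussMeasure n)
      (g := fun t : ℝ => ∏ j, (g (ni j) (M * t) * ∫ ξ, h j ξ ∂gaussMeasure (ni j)) ^ p j)
      (b := nhdsWithin 0 (Set.Ioi 0)) ?_ ?_ ?_
  · have h1 : Filter.Tendsto (fun t : ℝ => ∏ j, g (ni j) (-M * t) ^ p j)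
        (nhdsWithin 0 (Set.Ioi 0)) (nhds (∏ j, (1 : ℝ) ^ p j)) :=
      tendsto_finsetProd _ fun j _ =>
        ((hgc (ni j)).comp (ht (-M))).rpow_const (Or.inr (hp j))
    simpa using h1.mul_const (∫ ξ, ∏ j, h j (C j *ᵥ ξ) ^ p j ∂gaussMeasure n)
  · have h1 : Filter.Tendsto
        (fun t : ℝ => ∏ j, (g (ni j) (M * t) * ∫ ξ, h j ξ ∂gaussMeasure (ni j)) ^ p j)
        (nhdsWithin 0 (Set.Ioi 0))
        (nhds (∏ j, (1 * ∫ ξ, h j ξ ∂gaussMeasure (ni j)) ^ p j)) :=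
      tendsto_finsetProd _ fun j _ =>
        (((hgc (ni j)).comp (ht M)).mul_const _).rpow_const (Or.inr (hp j))
    simpa using h1
  · filter_upwards [self_mem_nhdsWithin] with t ht0
    rw [Set.mem_Ioi] at ht0
    simpa using hkey t ht0

end Datum

/-- The largest `M`-Lipschitz minorant of `φ`. -/
def infConv {k : ℕ} (M : ℝ) (φ : (Fin k → ℝ) → ℝ) (x : Fin k → ℝ) : ℝ :=
  ⨅ y, (φ y + M * ‖x - y‖)

section InfConv

variable {k : ℕ} {M : ℝ} {φ : (Fin k → ℝ) → ℝ}

lemma bddBelow_infConv (hM : 0 ≤ M) {z : Fin k → ℝ} (hz : ∀ y, φ z - M * ‖z - y‖ ≤ φ y)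
    (x : Fin k → ℝ) : BddBelow (Set.range fun y => φ y + M * ‖x - y‖) := by
  refine ⟨φ z - M * ‖z - x‖, ?_⟩
  rintro _ ⟨y, rfl⟩
  have h1 := mul_le_mul_of_nonneg_left (norm_sub_le_norm_sub_add_norm_sub z x y) hM
  have := hz y
  simp only
  linarith

lemma infConv_le (hb : ∀ x, BddBelow (Set.range fun y => φ y + M * ‖x - y‖)) (x y : Fin k → ℝ) :
    infConv M φ x ≤ φ y + M * ‖x - y‖ :=
  ciInf_le (hb x) y

lemma infConv_le_self (hb : ∀ x, BddBelow (Set.range fun y => φ y + M * ‖x - y‖))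
    (x : Fin k → ℝ) : infConv M φ x ≤ φ x := by
  simpa using infConv_le hb x x

lemma infConv_sub_le (hM : 0 ≤ M) (hb : ∀ x, BddBelow (Set.range fun y => φ y + M * ‖x - y‖))
    (x x' : Fin k → ℝ) : infConv M φ x - infConv M φ x' ≤ M * ‖x - x'‖ := by
  have : infConv M φ x - M * ‖x - x'‖ ≤ infConv M φ x' := by
    refine le_ciInf fun y => ?_
    have h1 := infConv_le hb x y
    have h2 := mul_le_mul_of_nonneg_left (norm_sub_le_norm_sub_add_norm_sub x x' y) hM
    linarith
  linarith

lemma infConv_eq_self {x : Fin k → ℝ} (hM : 0 ≤ M) (hx : ∀ y, φ x - M * ‖x - y‖ ≤ φ y) :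
    infConv M φ x = φ x := by
  refine le_antisymm (infConv_le_self (bddBelow_infConv hM hx) x) (le_ciInf fun y => ?_)
  linarith [hx y]

lemma two_mul_infConv_le (hM : 0 ≤ M)
    (hb : ∀ x, BddBelow (Set.range fun y => φ y + M * ‖x - y‖))
    (hφ : ∀ y z, 2 * φ ((2 : ℝ)⁻¹ • (y + z)) ≤ φ y + φ z) (x v : Fin k → ℝ) :
    2 * infConv M φ x ≤ infConv M φ (x + v) + infConv M φ (x - v) := by
  refine le_ciInf_add_ciInf fun y z => ?_
  have h1 := infConv_le hb x ((2 : ℝ)⁻¹ • (y + z))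
  have h2 : 2 * ‖x - (2 : ℝ)⁻¹ • (y + z)‖ ≤ ‖x + v - y‖ + ‖x - v - z‖ := by
    refine le_trans (le_of_eq ?_) (norm_add_le _ _)
    have hn : ‖(2 : ℝ) • (x - (2 : ℝ)⁻¹ • (y + z))‖ = 2 * ‖x - (2 : ℝ)⁻¹ • (y + z)‖ := by
      rw [norm_smul, Real.norm_two]
    rw [← hn, smul_sub, smul_smul, mul_inv_cancel₀ two_ne_zero, one_smul, two_smul]
    congr 1
    abel
  have h3 := mul_le_mul_of_nonneg_left h2 hM
  linarith [hφ y z]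

lemma infConv_add_eq {v : Fin k → ℝ} (hφ : ∀ y, φ (y + v) = φ y) (x : Fin k → ℝ) :
    infConv M φ (x + v) = infConv M φ x := by
  refine ((Equiv.addRight v).iInf_congr fun y => ?_).symm
  simp [hφ]

lemma infConv_nonneg (hM : 0 ≤ M) (hφ : ∀ y, 0 ≤ φ y) (x : Fin k → ℝ) : 0 ≤ infConv M φ x :=
  le_ciInf fun y => add_nonneg (hφ y) (by positivity)

lemma logLip_exp_infConv (hM : 0 ≤ M)
    (hb : ∀ x, BddBelow (Set.range fun y => φ y + M * ‖x - y‖)) :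
    LogLip M fun x => Real.exp (infConv M φ x) :=
  logLip_of_abs_log_sub_log_le (fun _ => Real.exp_pos _) fun x y => by
    simpa using infConv_sub_le hM hb x y

end InfConv

lemma ConvexOn.exists_sub_mul_norm_le {k : ℕ} {φ : (Fin k → ℝ) → ℝ}
    (hφ : ConvexOn ℝ Set.univ φ) (x : Fin k → ℝ) :
    ∃ L, 0 ≤ L ∧ ∀ y, φ x - L * ‖x - y‖ ≤ φ y := by
  obtain ⟨K, t, ht, hK⟩ := hφ.locallyLipschitz x
  refine ⟨K, K.2, fun y => ?_⟩
  have hc : Filter.Tendsto (fun s : ℝ => x + s • (y - x)) (nhdsWithin 0 (Set.Ioi 0)) (nhds x) := by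
    have : Continuous fun s : ℝ => x + s • (y - x) := by fun_prop
    have := this.tendsto 0
    rw [zero_smul, add_zero] at this
    exact this.mono_left nhdsWithin_le_nhds
  obtain ⟨s, hs, hs0, hs1⟩ := ((hc.eventually ht).and (Ioc_mem_nhdsGT (zero_lt_one' ℝ))).exists
  have h1 := hφ.2 (Set.mem_univ x) (Set.mem_univ y) (sub_nonneg.2 hs1) hs0.le (by ring)
  have hz : (1 - s) • x + s • y = x + s • (y - x) := by
    rw [sub_smul, one_smul, smul_sub]; abel
  rw [hz, smul_eq_mul, smul_eq_mul] at h1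
  have h2 := hK.dist_le_mul x (mem_of_mem_nhds ht) _ hs
  rw [Real.dist_eq, dist_eq_norm, sub_add_cancel_left, norm_neg, norm_smul, Real.norm_eq_abs,
    abs_of_pos hs0, norm_sub_rev] at h2
  have h3 := (abs_le.1 h2).2
  have h4 : s * (φ x - K * ‖x - y‖) ≤ s * φ y := by linarith
  exact le_of_mul_le_mul_left h4 hs0

lemma LogLip.mul {k : ℕ} {M M' : ℝ} {g h : (Fin k → ℝ) → ℝ} (hg : LogLip M g) (hh : LogLip M' h) :
    LogLip (M + M') fun x => g x * h x := by
  refine ⟨fun x => mul_pos (hg.1 x) (hh.1 x), fun x y => ?_⟩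
  have := mul_le_mul (hg.2 x y) (hh.2 x y) (hh.1 x).le (mul_pos (Real.exp_pos _) (hg.1 y)).le
  rw [add_mul, Real.exp_add]
  linarith

lemma Matrix.PosSemidef.quadForm_nonneg {k : ℕ} {W : Matrix (Fin k) (Fin k) ℝ}
    (hW : W.PosSemidef) (x : Fin k → ℝ) : 0 ≤ W *ᵥ x ⬝ᵥ x := by
  rw [dotProduct_comm]
  simpa using hW.dotProduct_mulVec_nonneg x

lemma Matrix.PosSemidef.mulVec_dotProduct_comm {k : ℕ} {W : Matrix (Fin k) (Fin k) ℝ}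
    (hW : W.PosSemidef) (x y : Fin k → ℝ) : W *ᵥ x ⬝ᵥ y = W *ᵥ y ⬝ᵥ x := by
  have h : Wᵀ = W := hW.1
  rw [dotProduct_comm, dotProduct_mulVec, ← mulVec_transpose, h]

lemma Matrix.PosSemidef.quadForm_add {k : ℕ} {W : Matrix (Fin k) (Fin k) ℝ}
    (hW : W.PosSemidef) (x y : Fin k → ℝ) :
    W *ᵥ (x + y) ⬝ᵥ (x + y) = W *ᵥ x ⬝ᵥ x + 2 * (W *ᵥ x ⬝ᵥ y) + W *ᵥ y ⬝ᵥ y := by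
  rw [mulVec_add, add_dotProduct, dotProduct_add, dotProduct_add,
    hW.mulVec_dotProduct_comm y x]
  ring

lemma Matrix.PosSemidef.exists_quadForm_sub_le {k : ℕ} {W : Matrix (Fin k) (Fin k) ℝ}
    (hW : W.PosSemidef) (x : Fin k → ℝ) :
    ∃ L, 0 ≤ L ∧ ∀ y, W *ᵥ x ⬝ᵥ x - L * ‖x - y‖ ≤ W *ᵥ y ⬝ᵥ y := by
  refine ⟨2 * (k * ‖W *ᵥ x‖), by positivity, fun y => ?_⟩
  have h1 := hW.quadForm_add x (y - x)
  rw [add_sub_cancel] at h1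
  have h2 := (abs_le.1 (abs_dotProduct_le_card (W *ᵥ x) (y - x))).1
  rw [norm_sub_rev] at h2
  linarith [hW.quadForm_nonneg (y - x)]

section Datum

variable {n m : ℕ} {ni : Fin m → ℕ} {C : ∀ j, Matrix (Fin (ni j)) (Fin n) ℝ} {p : Fin m → ℝ}
  {l : Fin m → ℕ} {D : ∀ j, Matrix (Fin (ni j)) (Fin (l j)) ℝ}
  {W : ∀ j, Matrix (Fin (ni j)) (Fin (ni j)) ℝ}

/-- The Gaussian form of the inequality for inputs `gaussFn W * u` with `u` log-Lipschitz and
midpoint log-convex. -/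
lemma integral_prod_gaussFn_mul_le (hp : ∀ j, 0 ≤ p j) (hC : ∑ j, p j • ((C j)ᵀ * C j) = 1)
    (hCD : ∀ j, C j * (C j)ᵀ + D j * (D j)ᵀ = 1) (hWD : ∀ j, W j * D j = 0)
    (hW : ∀ j, (W j).PosSemidef)
    {M : ℝ} (hM : 0 ≤ M) {u : ∀ j, (Fin (ni j) → ℝ) → ℝ}
    (hu : ∀ j, LogLip M (u j)) (hconv : ∀ j, MidLogConvexAlong 0 (u j)) :
    Integrable (fun ξ => ∏ j, (gaussFn (W j) (C j *ᵥ ξ) * u j (C j *ᵥ ξ)) ^ p j)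
        (gaussMeasure n) ∧
      ∫ ξ, ∏ j, (gaussFn (W j) (C j *ᵥ ξ) * u j (C j *ᵥ ξ)) ^ p j ∂gaussMeasure n ≤
      ∏ j, (∫ ξ, gaussFn (W j) ξ * u j ξ ∂gaussMeasure (ni j)) ^ p j := by
  set s : ∀ j, (Fin (ni j) → ℝ) → ℝ := fun j x => W j *ᵥ x ⬝ᵥ x with hs
  have hs0 : ∀ j y, 0 ≤ s j y := fun j y => (hW j).quadForm_nonneg y
  have hb : ∀ (N : ℕ) j x, BddBelow (Set.range fun y => s j y + N * ‖x - y‖) := fun N j x =>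
    ⟨0, by rintro _ ⟨y, rfl⟩; exact add_nonneg (hs0 j y) (by positivity)⟩
  set h : ℕ → ∀ j, (Fin (ni j) → ℝ) → ℝ :=
    fun N j x => Real.exp (-Real.pi * infConv N (s j) x) * u j x with hh
  have hE : ∀ (N : ℕ) j, LogLip (Real.pi * N) fun x => Real.exp (-Real.pi * infConv N (s j) x) :=
    fun N j => logLip_of_abs_log_sub_log_le (fun _ => Real.exp_pos _) fun x y => by
      have := infConv_sub_le (Nat.cast_nonneg N) (hb N j) y x
      rw [norm_sub_rev] at this
      have := mul_le_mul_of_nonneg_left this Real.pi_pos.le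
      rw [Real.log_exp, Real.log_exp]
      linarith
  have hLip : ∀ (N : ℕ) j, LogLip (Real.pi * N + M) (h N j) := fun N j => (hE N j).mul (hu j)
  have hMid : ∀ N j, MidLogConvexAlong (W j) (h N j) := by
    intro N j x v hv
    have hsv : ∀ y, s j (y + v) = s j y := fun y => by
      simp only [hs]
      rw [(hW j).quadForm_add, (hW j).mulVec_dotProduct_comm y v, hv]
      simp
    have h1 := infConv_add_eq (M := N) hsv x
    have h2 := infConv_add_eq (M := N) hsv (x - v)
    rw [sub_add_cancel] at h2
    have h3 := hconv j x v (zero_mulVec v)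
    simp only [hh, h1, ← h2]
    have h4 := mul_le_mul_of_nonneg_left h3
      (sq_nonneg (Real.exp (-Real.pi * infConv N (s j) x)))
    linarith
  have hle : ∀ N j x, gaussFn (W j) x * u j x ≤ h N j x := fun N j x => by
    refine mul_le_mul_of_nonneg_right (Real.exp_le_exp.2 ?_) ((hu j).1 x).le
    exact mul_le_mul_of_nonpos_left (infConv_le_self (hb N j) x) (by linarith [Real.pi_pos])
  have hgu : ∀ j x, 0 < gaussFn (W j) x * u j x := fun j x =>
    mul_pos (Real.exp_pos _) ((hu j).1 x)
  choose c hc0 hc using fun j => exists_norm_mulVec_le (C j)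
  have hI : ∀ N, Integrable (fun ξ => ∏ j, h N j (C j *ᵥ ξ) ^ p j) (gaussMeasure n) := fun N => by
    simpa using (LogLip.prod_rpow (by positivity) hp hc (hLip N)).integrable 0 1
  have hple : ∀ N ξ, ∏ j, (gaussFn (W j) (C j *ᵥ ξ) * u j (C j *ᵥ ξ)) ^ p j ≤
      ∏ j, h N j (C j *ᵥ ξ) ^ p j := fun N ξ =>
    Finset.prod_le_prod (fun j _ => Real.rpow_nonneg (hgu j _).le _)
      fun j _ => Real.rpow_le_rpow (hgu j _).le (hle N j _) (hp j)
  have hcont : ∀ j, Continuous fun x => gaussFn (W j) x * u j x := fun j => by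
    have := (hu j).continuous
    unfold gaussFn
    fun_prop
  have hint : Integrable (fun ξ => ∏ j, (gaussFn (W j) (C j *ᵥ ξ) * u j (C j *ᵥ ξ)) ^ p j)
      (gaussMeasure n) := by
    refine (hI 0).mono' (Continuous.aestronglyMeasurable ?_) (Filter.Eventually.of_forall fun ξ => ?_)
    · refine continuous_finsetProd _ fun j _ => Continuous.rpow_const ?_ fun _ => Or.inr (hp j)
      exact (hcont j).comp (by fun_prop : Continuous fun ξ : Fin n → ℝ => C j *ᵥ ξ)
    · rw [Real.norm_of_nonneg (Finset.prod_nonneg fun j _ => Real.rpow_nonneg (hgu j _).le _)]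
      exact hple 0 ξ
  refine ⟨hint, ?_⟩
  have hlim : ∀ j, Filter.Tendsto (fun N => ∫ ξ, h N j ξ ∂gaussMeasure (ni j)) Filter.atTop
      (nhds (∫ ξ, gaussFn (W j) ξ * u j ξ ∂gaussMeasure (ni j))) := fun j => by
    refine tendsto_integral_of_dominated_convergence (u j)
      (fun N => (hLip N j).continuous.aestronglyMeasurable)
      (by simpa using (hu j).integrable 0 1)
      (fun N => Filter.Eventually.of_forall fun x => ?_)
      (Filter.Eventually.of_forall fun x => ?_)
    · rw [Real.norm_of_nonneg ((hLip N j).1 x).le]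
      refine mul_le_of_le_one_left ((hu j).1 x).le (Real.exp_le_one_iff.2 ?_)
      have := infConv_nonneg (Nat.cast_nonneg N) (hs0 j) x
      nlinarith [Real.pi_pos]
    · refine tendsto_const_nhds.congr' ?_
      obtain ⟨L, -, hL⟩ := (hW j).exists_quadForm_sub_le x
      filter_upwards [Filter.eventually_ge_atTop ⌈L⌉₊] with N hN
      have : infConv N (s j) x = s j x := infConv_eq_self (Nat.cast_nonneg N) fun y => by
        refine le_trans ?_ (hL y)
        have := mul_le_mul_of_nonneg_right (Nat.ceil_le.1 hN) (norm_nonneg (x - y))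
        linarith
      simp only [hh, this]
      rfl
  refine ge_of_tendsto' (tendsto_finsetProd _ fun j _ => (hlim j).rpow_const (Or.inr (hp j)))
    fun N => ?_
  exact (integral_mono hint (hI N) (hple N)).trans
    (integral_prod_gaussMeasure_le hp hC hCD hWD (by positivity) (hLip N) (hMid N))

end Datum

section Factor

open scoped MatrixOrder Matrix.Norms.L2Operator

lemma Matrix.PosSemidef.exists_eq_transpose_mul_self {k : ℕ} {A : Matrix (Fin k) (Fin k) ℝ}
    (hA : A.PosSemidef) : ∃ B : Matrix (Fin k) (Fin k) ℝ, A = Bᵀ * B := by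
  obtain ⟨B, hB⟩ := CStarAlgebra.nonneg_iff_eq_star_mul_self.mp hA.nonneg
  exact ⟨B, by rw [hB, star_eq_conjTranspose, conjTranspose_eq_transpose_of_trivial]⟩

end Factor

lemma exists_complement_of_posSemidef {n k : ℕ} {C : Matrix (Fin k) (Fin n) ℝ}
    {W : Matrix (Fin k) (Fin k) ℝ} (hC : (1 - C * Cᵀ).PosSemidef) (hW : W.PosSemidef)
    (h : (1 - C * Cᵀ) * W = 0) :
    ∃ D : Matrix (Fin k) (Fin k) ℝ, C * Cᵀ + D * Dᵀ = 1 ∧ W * D = 0 := by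
  obtain ⟨B, hB⟩ := hC.exists_eq_transpose_mul_self
  refine ⟨Bᵀ, ?_, ?_⟩
  · rw [transpose_transpose, ← hB]
    abel
  · rw [hB] at h
    have hBW : B * W = 0 := by
      rw [← conjTranspose_mul_self_mul_eq_zero, conjTranspose_eq_transpose_of_trivial]
      exact h
    have hWt : Wᵀ = W := by
      rw [← conjTranspose_eq_transpose_of_trivial]
      exact hW.isHermitian
    have := congrArg transpose hBW
    rwa [transpose_mul, hWt, transpose_zero] at this

lemma gaussFn_pos {k : ℕ} (A : Matrix (Fin k) (Fin k) ℝ) (x : Fin k → ℝ) : 0 < gaussFn A x :=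
  Real.exp_pos _

lemma continuous_gaussFn {k : ℕ} (A : Matrix (Fin k) (Fin k) ℝ) : Continuous (gaussFn A) := by
  unfold gaussFn
  fun_prop

lemma gaussFn_one {k : ℕ} (x : Fin k → ℝ) :
    gaussFn 1 x = Real.exp (-Real.pi * (x ⬝ᵥ x)) := by
  rw [gaussFn, one_mulVec]

lemma gaussFn_add {k : ℕ} (A B : Matrix (Fin k) (Fin k) ℝ) (x : Fin k → ℝ) :
    gaussFn (A + B) x = gaussFn A x * gaussFn B x := by
  rw [gaussFn, gaussFn, gaussFn, ← Real.exp_add, add_mulVec, add_dotProduct, mul_add]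

lemma gaussFn_smul {k : ℕ} (c : ℝ) (A : Matrix (Fin k) (Fin k) ℝ) (x : Fin k → ℝ) :
    gaussFn (c • A) x = gaussFn A x ^ c := by
  rw [gaussFn, gaussFn, ← Real.exp_mul, smul_mulVec, smul_dotProduct, smul_eq_mul]
  ring_nf

lemma gaussFn_sum {k : ℕ} {ι : Type*} (s : Finset ι) (A : ι → Matrix (Fin k) (Fin k) ℝ)
    (x : Fin k → ℝ) : gaussFn (∑ i ∈ s, A i) x = ∏ i ∈ s, gaussFn (A i) x := by
  classical
  induction s using Finset.induction_on with
  | empty => simp [gaussFn]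
  | insert i s hi ih => rw [Finset.sum_insert hi, Finset.prod_insert hi, gaussFn_add, ih]

lemma gaussFn_transpose_mul_mul {k n : ℕ} (A : Matrix (Fin k) (Fin k) ℝ)
    (C : Matrix (Fin k) (Fin n) ℝ) (x : Fin n → ℝ) :
    gaussFn (Cᵀ * A * C) x = gaussFn A (C *ᵥ x) := by
  rw [gaussFn, gaussFn, ← mulVec_mulVec, ← mulVec_mulVec, dotProduct_comm,
    dotProduct_mulVec, vecMul_transpose, dotProduct_comm]

lemma prod_gaussFn_mulVec_rpow {n m : ℕ} {ni : Fin m → ℕ}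
    (C : ∀ j, Matrix (Fin (ni j)) (Fin n) ℝ) (p : Fin m → ℝ)
    (B : ∀ j, Matrix (Fin (ni j)) (Fin (ni j)) ℝ) (x : Fin n → ℝ) :
    ∏ j, gaussFn (B j) (C j *ᵥ x) ^ p j = gaussFn (∑ j, p j • ((C j)ᵀ * B j * C j)) x := by
  rw [gaussFn_sum]
  exact Finset.prod_congr rfl fun j _ => by rw [gaussFn_smul, gaussFn_transpose_mul_mul]

lemma lintegral_gaussFn {k : ℕ} {A : Matrix (Fin k) (Fin k) ℝ} (hA : A.PosDef) :
    ∫⁻ x, ENNReal.ofReal (gaussFn A x) = ENNReal.ofReal (√A.det)⁻¹ := by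
  obtain ⟨N, hN⟩ := hA.posSemidef.exists_eq_transpose_mul_self
  have hdet : A.det = N.det * N.det := by rw [hN, det_mul, det_transpose]
  have hN0 : N.det ≠ 0 := by
    intro h
    have := hA.det_pos
    rw [hdet, h] at this
    simp at this
  have h1 : ∀ x, gaussFn A x = gaussFn 1 (toLin' N x) := fun x => by
    rw [toLin'_apply, ← gaussFn_transpose_mul_mul, mul_one, hN]
  have h2 : ∫⁻ x : Fin k → ℝ, ENNReal.ofReal (gaussFn 1 x) = 1 := by
    have := lintegral_gaussMeasure (k := k) (F := fun _ => 1) measurable_const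
    simp only [lintegral_const, measure_univ, mul_one] at this
    simp only [gaussFn_one]
    exact this.symm
  simp only [h1]
  have hm : Measurable (toLin' N) := (toLin' N).continuous_of_finiteDimensional.measurable
  rw [← lintegral_map (μ := volume) (f := fun y => ENNReal.ofReal (gaussFn 1 y))
    (continuous_gaussFn 1).measurable.ennreal_ofReal hm,
    Real.map_matrix_volume_pi_eq_smul_volume_pi hN0, lintegral_smul_measure, h2, smul_eq_mul,
    mul_one, hdet, Real.sqrt_mul_self_eq_abs, abs_inv]

lemma integrable_gaussFn {k : ℕ} {A : Matrix (Fin k) (Fin k) ℝ} (hA : A.PosDef) :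
    Integrable (gaussFn A) := by
  refine ⟨(continuous_gaussFn A).aestronglyMeasurable, ?_⟩
  rw [hasFiniteIntegral_iff_ofReal (Filter.Eventually.of_forall fun x => (gaussFn_pos A x).le),
    lintegral_gaussFn hA]
  exact ENNReal.ofReal_lt_top

lemma moreLogConvex_gaussFn {k : ℕ} {A Q : Matrix (Fin k) (Fin k) ℝ} (h : (Q - A).PosSemidef) :
    MoreLogConvex (gaussFn A) Q := by
  refine ⟨fun x => Real.exp (Real.pi * ((Q - A) *ᵥ x ⬝ᵥ x)), ⟨fun x => (Real.exp_pos _).le, ?_⟩, ?_⟩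
  · intro x y a b ha hb hab
    rw [← Real.exp_mul, ← Real.exp_mul, ← Real.exp_add, Real.exp_le_exp]
    have h0 := h.quadForm_nonneg (x - y)
    have hc := h.mulVec_dotProduct_comm x y
    have hq : (Q - A) *ᵥ (a • x + b • y) ⬝ᵥ (a • x + b • y) + a * b * ((Q - A) *ᵥ (x - y) ⬝ᵥ (x - y))
        = a * ((Q - A) *ᵥ x ⬝ᵥ x) + b * ((Q - A) *ᵥ y ⬝ᵥ y) := by
      simp only [mulVec_add, mulVec_sub, mulVec_smul, add_dotProduct, sub_dotProduct,
        dotProduct_add, dotProduct_sub, smul_dotProduct, dotProduct_smul, smul_eq_mul]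
      obtain rfl : b = 1 - a := by linarith
      rw [hc]
      ring
    have := mul_nonneg Real.pi_pos.le (mul_nonneg (mul_nonneg ha hb) h0)
    have := congrArg (Real.pi * ·) hq
    simp only [mul_add] at this
    linarith
  · funext x
    rw [gaussFn, gaussFn, ← Real.exp_add, sub_mulVec, sub_dotProduct]
    ring_nf

section Functional

variable {n m : ℕ} {ni : Fin m → ℕ} {C : ∀ j, Matrix (Fin (ni j)) (Fin n) ℝ} {p : Fin m → ℝ}
  {Q : ∀ j, Matrix (Fin (ni j)) (Fin (ni j)) ℝ}

lemma GeometricDatum.lintegral_prod_gaussFn_mul_exp_le (hgeo : GeometricDatum C p Q)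
    (hp : ∀ j, 0 < p j) {φ : ∀ j, (Fin (ni j) → ℝ) → ℝ}
    (hφ : ∀ j, ConvexOn ℝ Set.univ (φ j))
    (hint : ∀ j, Integrable fun x => gaussFn (Q j) x * Real.exp (φ j x)) :
    ∫⁻ x, ENNReal.ofReal (∏ j, (gaussFn (Q j) (C j *ᵥ x) * Real.exp (φ j (C j *ᵥ x))) ^ p j) ≤
      ∏ j, ENNReal.ofReal (∫ y, gaussFn (Q j) y * Real.exp (φ j y)) ^ p j := by
  obtain ⟨hCC, hW, hCW, hC⟩ := hgeo
  choose D hCD hWD using fun j => exists_complement_of_posSemidef (hCC j) (hW j) (hCW j)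
  set W : ∀ j, Matrix (Fin (ni j)) (Fin (ni j)) ℝ := fun j => Q j - 1 with hWdef
  choose L hL0 hL using fun j x => (hφ j).exists_sub_mul_norm_le x
  have hφc : ∀ j, Continuous (φ j) := fun j => (hφ j).locallyLipschitz.continuous
  have hQW : ∀ j x, Real.exp (-Real.pi * (x ⬝ᵥ x)) * gaussFn (W j) x = gaussFn (Q j) x :=
    fun j x => by rw [← gaussFn_one, ← gaussFn_add]; simp [hWdef]
  set M : ℕ → ℝ := fun k => ∑ j, L j 0 + k with hMdef
  have hM0 : ∀ k, 0 ≤ M k := fun k =>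
    add_nonneg (Finset.sum_nonneg fun j _ => hL0 j 0) (Nat.cast_nonneg k)
  have hLM : ∀ k j, L j 0 ≤ M k := fun k j =>
    (Finset.single_le_sum (f := fun j => L j 0) (fun j _ => hL0 j 0) (Finset.mem_univ j)).trans
      (le_add_of_nonneg_right (Nat.cast_nonneg k))
  have hmono : ∀ j x K, L j x ≤ K → ∀ y, φ j x - K * ‖x - y‖ ≤ φ j y := fun j x K hK y =>
    (sub_le_sub_left (mul_le_mul_of_nonneg_right hK (norm_nonneg _)) _).trans (hL j x y)
  have hb : ∀ k j x, BddBelow (Set.range fun y => φ j y + M k * ‖x - y‖) := fun k j =>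
    bddBelow_infConv (hM0 k) (hmono j 0 (M k) (hLM k j))
  have hmid : ∀ j y z, 2 * φ j ((2 : ℝ)⁻¹ • (y + z)) ≤ φ j y + φ j z := fun j y z => by
    have := (hφ j).2 (Set.mem_univ y) (Set.mem_univ z) (show (0 : ℝ) ≤ 2⁻¹ by norm_num)
      (show (0 : ℝ) ≤ 2⁻¹ by norm_num) (by norm_num)
    rw [smul_add]
    simp only [smul_eq_mul] at this
    linarith
  set u : ℕ → ∀ j, (Fin (ni j) → ℝ) → ℝ := fun k j x => Real.exp (infConv (M k) (φ j) x) with hu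
  have huL : ∀ k j, LogLip (M k) (u k j) := fun k j => logLip_exp_infConv (hM0 k) (hb k j)
  have huc : ∀ k j, MidLogConvexAlong 0 (u k j) := fun k j x v _ => by
    simp only [hu]
    rw [← Real.exp_add, ← Real.exp_nat_mul, Real.exp_le_exp]
    exact_mod_cast two_mul_infConv_le (hM0 k) (hb k j) (hmid j) x v
  have hle : ∀ k j x, u k j x ≤ Real.exp (φ j x) := fun k j x =>
    Real.exp_le_exp.2 (infConv_le_self (hb k j) x)
  have hintγ : ∀ j, Integrable (fun x => gaussFn (W j) x * Real.exp (φ j x))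
      (gaussMeasure (ni j)) := fun j => by
    rw [integrable_gaussMeasure_iff]
    refine (hint j).congr (Filter.Eventually.of_forall fun x => ?_)
    simp only [smul_eq_mul]
    rw [← mul_assoc, hQW]
  have hγ : ∀ j, ∫ x, gaussFn (W j) x * Real.exp (φ j x) ∂gaussMeasure (ni j) =
      ∫ x, gaussFn (Q j) x * Real.exp (φ j x) := fun j => by
    rw [integral_gaussMeasure]
    refine integral_congr_ae (Filter.Eventually.of_forall fun x => ?_)
    simp only [smul_eq_mul]
    rw [← mul_assoc, hQW]
  set F : ℕ → (Fin n → ℝ) → ℝ := fun k ξ =>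
    ∏ j, (gaussFn (W j) (C j *ᵥ ξ) * u k j (C j *ᵥ ξ)) ^ p j with hF
  set G : (Fin n → ℝ) → ℝ := fun ξ =>
    ∏ j, (gaussFn (W j) (C j *ᵥ ξ) * Real.exp (φ j (C j *ᵥ ξ))) ^ p j with hG
  have hcont : ∀ v : ∀ j, (Fin (ni j) → ℝ) → ℝ, (∀ j, Continuous (v j)) → Continuous fun ξ =>
      ∏ j, (gaussFn (W j) (C j *ᵥ ξ) * v j (C j *ᵥ ξ)) ^ p j := fun v hv =>
    continuous_finsetProd _ fun j _ =>
      (((continuous_gaussFn (W j)).comp (by fun_prop)).mul ((hv j).comp (by fun_prop))).rpow_const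
        fun _ => Or.inr (hp j).le
  have hFc : ∀ k, Continuous (F k) := fun k => hcont _ fun j => (huL k j).continuous
  have hGc : Continuous G := hcont (fun j x => Real.exp (φ j x)) fun j =>
    Real.continuous_exp.comp (hφc j)
  have hbound : ∀ k, ∫⁻ ξ, ENNReal.ofReal (F k ξ) ∂gaussMeasure n ≤
      ∏ j, ENNReal.ofReal (∫ y, gaussFn (Q j) y * Real.exp (φ j y)) ^ p j := fun k => by
    obtain ⟨hFi, hFle⟩ := integral_prod_gaussFn_mul_le (fun j => (hp j).le) hC hCD hWD hW (hM0 k)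
      (huL k) (huc k)
    have hnn : ∀ j x, 0 ≤ gaussFn (W j) x * u k j x := fun j x =>
      mul_nonneg (gaussFn_pos _ _).le (Real.exp_pos _).le
    rw [← ofReal_integral_eq_lintegral_ofReal hFi (Filter.Eventually.of_forall fun ξ =>
      Finset.prod_nonneg fun j _ => Real.rpow_nonneg (hnn j _) _)]
    refine (ENNReal.ofReal_le_ofReal hFle).trans ?_
    rw [ENNReal.ofReal_prod_of_nonneg fun j _ => Real.rpow_nonneg (integral_nonneg (hnn j)) _]
    refine Finset.prod_le_prod' fun j _ => ?_
    rw [← ENNReal.ofReal_rpow_of_nonneg (integral_nonneg (hnn j)) (hp j).le, ← hγ]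
    refine ENNReal.rpow_le_rpow (ENNReal.ofReal_le_ofReal ?_) (hp j).le
    exact integral_mono_of_nonneg (Filter.Eventually.of_forall (hnn j)) (hintγ j)
      (Filter.Eventually.of_forall fun x =>
        mul_le_mul_of_nonneg_left (hle k j x) (gaussFn_pos _ _).le)
  have hlim : ∀ ξ, Filter.liminf (fun k => ENNReal.ofReal (F k ξ)) Filter.atTop =
      ENNReal.ofReal (G ξ) := fun ξ => by
    refine Filter.Tendsto.liminf_eq (tendsto_const_nhds.congr' ?_)
    obtain ⟨N, hN⟩ := exists_nat_ge (∑ j, L j (C j *ᵥ ξ))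
    filter_upwards [Filter.eventually_ge_atTop N] with k hk
    have : F k ξ = G ξ := Finset.prod_congr rfl fun j _ => by
      have hj : L j (C j *ᵥ ξ) ≤ M k := by
        have h1 := Finset.single_le_sum (f := fun j => L j (C j *ᵥ ξ)) (fun j _ => hL0 j _)
          (Finset.mem_univ j)
        have h2 : (N : ℝ) ≤ k := by exact_mod_cast hk
        have h3 : 0 ≤ ∑ j, L j 0 := Finset.sum_nonneg fun j _ => hL0 j 0
        simp only [hMdef] at h1 ⊢
        linarith
      simp only [hu]
      rw [infConv_eq_self (hM0 k) (hmono j _ (M k) hj)]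
    rw [this]
  have hexp : ∀ x, ∏ j, (gaussFn (Q j) (C j *ᵥ x) * Real.exp (φ j (C j *ᵥ x))) ^ p j =
      Real.exp (-Real.pi * (x ⬝ᵥ x)) * G x := fun x => by
    have h1 := prod_gaussFn_mulVec_rpow C p (fun _ => 1) x
    simp only [Matrix.mul_one, hC] at h1
    rw [← gaussFn_one, ← h1, hG, ← Finset.prod_mul_distrib]
    refine Finset.prod_congr rfl fun j _ => ?_
    rw [← Real.mul_rpow (gaussFn_pos _ _).le
      (mul_nonneg (gaussFn_pos _ _).le (Real.exp_pos _).le), ← mul_assoc, gaussFn_one, hQW]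
  calc ∫⁻ x, ENNReal.ofReal
        (∏ j, (gaussFn (Q j) (C j *ᵥ x) * Real.exp (φ j (C j *ᵥ x))) ^ p j)
      = ∫⁻ ξ, ENNReal.ofReal (G ξ) ∂gaussMeasure n := by
        rw [lintegral_gaussMeasure hGc.measurable.ennreal_ofReal]
        exact lintegral_congr fun x => by rw [hexp, ENNReal.ofReal_mul (Real.exp_pos _).le]
    _ = ∫⁻ ξ, Filter.liminf (fun k => ENNReal.ofReal (F k ξ)) Filter.atTop ∂gaussMeasure n :=
        lintegral_congr fun ξ => (hlim ξ).symm
    _ ≤ Filter.liminf (fun k => ∫⁻ ξ, ENNReal.ofReal (F k ξ) ∂gaussMeasure n) Filter.atTop :=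
        lintegral_liminf_le fun k => (hFc k).measurable.ennreal_ofReal
    _ ≤ Filter.liminf (fun _ : ℕ =>
          ∏ j, ENNReal.ofReal (∫ y, gaussFn (Q j) y * Real.exp (φ j y)) ^ p j) Filter.atTop :=
        Filter.liminf_le_liminf (Filter.Eventually.of_forall hbound)
    _ = _ := Filter.liminf_const _

lemma LogConvexFun.eq_zero_of_eq_zero {k : ℕ} {h : (Fin k → ℝ) → ℝ} (hh : LogConvexFun h)
    {z : Fin k → ℝ} (hz : h z = 0) (x : Fin k → ℝ) : h x = 0 := by
  refine le_antisymm ?_ (hh.1 x)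
  have := hh.2 z ((2 : ℝ) • x - z) 2⁻¹ 2⁻¹ (by norm_num) (by norm_num) (by norm_num)
  rw [hz, Real.zero_rpow (by norm_num), zero_mul, ← smul_add, add_sub_cancel, smul_smul] at this
  simpa using this

lemma LogConvexFun.convexOn_log {k : ℕ} {h : (Fin k → ℝ) → ℝ} (hh : LogConvexFun h)
    (hpos : ∀ x, 0 < h x) : ConvexOn ℝ Set.univ fun x => Real.log (h x) := by
  refine ⟨convex_univ, fun x _ y _ a b ha hb hab => ?_⟩
  have := Real.log_le_log (hpos _) (hh.2 x y a b ha hb hab)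
  rwa [Real.log_mul (Real.rpow_pos_of_pos (hpos x) _).ne' (Real.rpow_pos_of_pos (hpos y) _).ne',
    Real.log_rpow (hpos x), Real.log_rpow (hpos y)] at this

lemma GeometricDatum.lintegral_prod_le (hgeo : GeometricDatum C p Q) (hp : ∀ j, 0 < p j)
    {f : ∀ j, (Fin (ni j) → ℝ) → ℝ} (hf : ∀ j, Integrable (f j))
    (hfQ : ∀ j, MoreLogConvex (f j) (Q j)) :
    ∫⁻ x, ENNReal.ofReal (∏ j, f j (C j *ᵥ x) ^ p j) ≤
      ∏ j, ENNReal.ofReal (∫ y, f j y) ^ p j := by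
  choose h hh hfh using hfQ
  by_cases hz : ∃ j z, h j z = 0
  · obtain ⟨j, z, hz⟩ := hz
    have : ∀ x, ∏ j, f j (C j *ᵥ x) ^ p j = 0 := fun x => by
      refine Finset.prod_eq_zero (Finset.mem_univ j) ?_
      rw [hfh j]
      simp only
      rw [(hh j).eq_zero_of_eq_zero hz, mul_zero, Real.zero_rpow (hp j).ne']
    simp [this]
  · push Not at hz
    have hpos : ∀ j x, 0 < h j x := fun j x => lt_of_le_of_ne ((hh j).1 x) (hz j x).symm
    have hfe : ∀ j, f j = fun x => gaussFn (Q j) x * Real.exp (Real.log (h j x)) := fun j => by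
      rw [hfh j]
      funext x
      rw [Real.exp_log (hpos j x)]
    have hf' : ∀ j, Integrable fun x => gaussFn (Q j) x * Real.exp (Real.log (h j x)) :=
      fun j => hfe j ▸ hf j
    have := hgeo.lintegral_prod_gaussFn_mul_exp_le hp
      (fun j => (hh j).convexOn_log (hpos j)) hf'
    obtain rfl : f = fun j x => gaussFn (Q j) x * Real.exp (Real.log (h j x)) := funext hfe
    exact this

lemma posDef_sum_smul_transpose_mul_mul
    (hker : ∀ x : Fin n → ℝ, (∀ j, C j *ᵥ x = 0) → x = 0)
    (hp : ∀ j, 0 < p j) {B : ∀ j, Matrix (Fin (ni j)) (Fin (ni j)) ℝ}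
    (hB : ∀ j, (B j).PosDef) : (∑ j, p j • ((C j)ᵀ * B j * C j)).PosDef := by
  have hS : (∑ j, p j • ((C j)ᵀ * B j * C j)).PosSemidef :=
    Matrix.posSemidef_sum _ fun j _ => by
      have := (hB j).posSemidef.conjTranspose_mul_mul_same (C j)
      rw [conjTranspose_eq_transpose_of_trivial] at this
      exact this.smul (hp j).le
  refine Matrix.PosDef.of_dotProduct_mulVec_pos hS.isHermitian fun x hx => ?_
  have hq : ∀ j, star x ⬝ᵥ (p j • ((C j)ᵀ * B j * C j)) *ᵥ x =
      p j * (star (C j *ᵥ x) ⬝ᵥ B j *ᵥ (C j *ᵥ x)) := fun j => by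
    rw [smul_mulVec, dotProduct_smul, smul_eq_mul, ← mulVec_mulVec, ← mulVec_mulVec,
      star_trivial, star_trivial, dotProduct_mulVec x, vecMul_transpose]
  rw [sum_mulVec, dotProduct_sum]
  simp only [hq]
  obtain ⟨j, hj⟩ : ∃ j, C j *ᵥ x ≠ 0 := by
    by_contra! h
    exact hx (hker x h)
  exact Finset.sum_pos' (fun i _ => mul_nonneg (hp i).le
    ((hB i).posSemidef.dotProduct_mulVec_nonneg _))
    ⟨j, Finset.mem_univ j, mul_pos (hp j) ((hB j).dotProduct_mulVec_pos hj)⟩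

lemma GeometricDatum.BLconst_eq_one (hgeo : GeometricDatum C p Q)
    (hker : ∀ x : Fin n → ℝ, (∀ j, C j *ᵥ x = 0) → x = 0) (hp : ∀ j, 0 < p j) :
    BLconst C p Q = 1 := by
  refine le_antisymm (iSup₂_le fun B hB => ?_) ?_
  · have hS := posDef_sum_smul_transpose_mul_mul hker hp fun j => (hB j).1
    have key := hgeo.lintegral_prod_le hp (fun j => integrable_gaussFn (hB j).1)
      fun j => moreLogConvex_gaussFn (hB j).2
    have hdet : ∀ j, 0 < (B j).det := fun j => (hB j).1.det_pos
    have hsqrt : ∀ j, 0 < (√(B j).det)⁻¹ := fun j => inv_pos.2 (Real.sqrt_pos.2 (hdet j))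
    simp only [prod_gaussFn_mulVec_rpow] at key
    rw [lintegral_gaussFn hS] at key
    simp only [ofReal_integral_eq_lintegral_ofReal (integrable_gaussFn (hB _).1)
      (Filter.Eventually.of_forall fun x => (gaussFn_pos _ x).le),
      lintegral_gaussFn (hB _).1, ENNReal.ofReal_rpow_of_pos (hsqrt _)] at key
    rw [← ENNReal.ofReal_prod_of_nonneg fun j _ => Real.rpow_nonneg (hsqrt j).le _,
      ENNReal.ofReal_le_ofReal_iff
        (Finset.prod_nonneg fun j _ => Real.rpow_nonneg (hsqrt j).le _)] at key
    refine ENNReal.rpow_le_one (ENNReal.div_le_of_le_mul ?_) (by norm_num)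
    simp only [ENNReal.ofReal_rpow_of_pos (hdet _)]
    rw [one_mul, ← ENNReal.ofReal_prod_of_nonneg fun j _ => Real.rpow_nonneg (hdet j).le _]
    refine ENNReal.ofReal_le_ofReal ?_
    have hone : (∏ j, (√(B j).det)⁻¹ ^ p j) ^ 2 * ∏ j, (B j).det ^ p j = 1 := by
      rw [← Finset.prod_pow, ← Finset.prod_mul_distrib]
      refine Finset.prod_eq_one fun j _ => ?_
      rw [Real.rpow_pow_comm (hsqrt j).le, ← Real.mul_rpow (sq_nonneg _) (hdet j).le, inv_pow,
        Real.sq_sqrt (hdet j).le, inv_mul_cancel₀ (hdet j).ne', Real.one_rpow]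
    have hsq := pow_le_pow_left₀ (inv_nonneg.2 (Real.sqrt_nonneg _)) key 2
    rw [inv_pow, Real.sq_sqrt hS.det_pos.le] at hsq
    have hP : 0 ≤ ∏ j, (B j).det ^ p j :=
      Finset.prod_nonneg fun j _ => Real.rpow_nonneg (hdet j).le _
    have := mul_le_mul_of_nonneg_right hsq hP
    rwa [hone, inv_mul_le_one₀ hS.det_pos] at this
  · refine le_iSup₂_of_le (fun _ => 1) (fun j => ⟨Matrix.PosDef.one, hgeo.2.1 j⟩) ?_
    simp [hgeo.2.2.2]

end Functional

/-- A generalized geometric Brascamp–Lieb datum has regularized Brascamp–Lieb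
constant `1`; in particular the corresponding functional inequality holds with
constant `1`. -/
theorem BLconst_eq_one_of_geometric
    {n m : ℕ} (hm : 1 ≤ m) {ni : Fin m → ℕ}
    (C : ∀ j, Matrix (Fin (ni j)) (Fin n) ℝ)
    (hCsurj : ∀ j, Function.Surjective (C j).mulVec)
    (hker : ∀ x : Fin n → ℝ, (∀ j, (C j).mulVec x = 0) → x = 0)
    (p : Fin m → ℝ) (hp : ∀ j, 0 < p j)
    (Q : ∀ j, Matrix (Fin (ni j)) (Fin (ni j)) ℝ) (hQ : ∀ j, (Q j).PosDef)
    (hgeo : GeometricDatum C p Q) :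
    BLconst C p Q = 1 ∧
      ∀ f : ∀ j, (Fin (ni j) → ℝ) → ℝ,
        (∀ j, Integrable (f j)) → (∀ j, MoreLogConvex (f j) (Q j)) →
        (∫⁻ x : Fin n → ℝ, ENNReal.ofReal (∏ j, f j ((C j).mulVec x) ^ p j)) ≤
          ∏ j, ENNReal.ofReal (∫ y, f j y) ^ p j := by
  exact ⟨hgeo.BLconst_eq_one hker hp, fun f hf hfQ => hgeo.lintegral_prod_le hp hf hfQ⟩
end
end

section
/- Let (C,p,Q) be a generalized geometric Brascamp–Lieb datum and set K = ⋂_{j=1}^m ( ker C_j + ker(I_n − C_jᵀ C_j) ) ⊆ ℝⁿ. If V ⊆ K is a subspace with C_iᵀ C_i V ⊆ V for all 1 ≤ i ≤ m, then V is critical: dim V = ∑_{i=1}^m p_i dim(C_i V). -/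
open MeasureTheory Matrix Module
open scoped ENNReal

noncomputable section

/-- For `v` in `ker A + ker (1 - AᵀA)`, the matrix `A` takes the same value at `v` and `AᵀA v`. -/
theorem mulVec_gram_mulVec_of_mem_sup {k n : Type*} [Fintype k] [Fintype n] [DecidableEq n]
    {R : Type*} [CommRing R] (A : Matrix k n R) {v : n → R}
    (hv : v ∈ LinearMap.ker A.mulVecLin ⊔
      LinearMap.ker ((1 - Aᵀ * A : Matrix n n R)).mulVecLin) :
    A *ᵥ ((Aᵀ * A) *ᵥ v) = A *ᵥ v := by
  obtain ⟨a, ha, b, hb, rfl⟩ := Submodule.mem_sup.1 hv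
  simp only [LinearMap.mem_ker, mulVecLin_apply, sub_mulVec, one_mulVec, sub_eq_zero] at ha hb
  have hab : (Aᵀ * A) *ᵥ (a + b) = b := by
    rw [mulVec_add, ← hb, ← mulVec_mulVec, ha, mulVec_zero, zero_add]
  rw [hab, mulVec_add, ha, zero_add]

/-- The trace of an idempotent endomorphism is its rank. -/
theorem trace_eq_finrank_range_of_isIdempotentElem {F W : Type*} [Field F] [AddCommGroup W]
    [Module F W] [FiniteDimensional F W] {P : W →ₗ[F] W} (hP : IsIdempotentElem P) :
    LinearMap.trace F W P = (finrank F (LinearMap.range P) : F) :=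
  (LinearMap.IsIdempotentElem.isProj_range P hP).trace

/-- If `AᵀA` preserves `V` and `A (AᵀA v) = A v` on `V`, then `AᵀA` restricts to a projection
of `V` whose trace is the dimension of `A V`. -/
theorem trace_restrict_gram_eq_finrank_map {k n : Type*} [Fintype k] [Fintype n]
    {F : Type*} [Field F] (A : Matrix k n F) (V : Submodule F (n → F))
    (hinv : ∀ v ∈ V, (Aᵀ * A).mulVecLin v ∈ V)
    (hA : ∀ v ∈ V, A *ᵥ ((Aᵀ * A) *ᵥ v) = A *ᵥ v) :
    LinearMap.trace F V ((Aᵀ * A).mulVecLin.restrict hinv) =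
      (finrank F (V.map A.mulVecLin) : F) := by
  set P := (Aᵀ * A).mulVecLin.restrict hinv with hP
  have hidem : IsIdempotentElem P := by
    ext1 v
    apply Subtype.ext
    change (Aᵀ * A) *ᵥ ((Aᵀ * A) *ᵥ (v : n → F)) = (Aᵀ * A) *ᵥ (v : n → F)
    rw [← mulVec_mulVec ((Aᵀ * A) *ᵥ (v : n → F)), hA v v.2, mulVec_mulVec]
  have hrange : finrank F (LinearMap.range P) = finrank F (V.map (Aᵀ * A).mulVecLin) := by
    rw [← Submodule.finrank_map_subtype_eq V (LinearMap.range P), ← LinearMap.range_comp, hP,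
      LinearMap.subtype_comp_restrict, LinearMap.domRestrict, LinearMap.range_comp,
      Submodule.range_subtype]
  have hmap : V.map (Aᵀ * A).mulVecLin = (V.map A.mulVecLin).map Aᵀ.mulVecLin := by
    rw [mulVecLin_mul, Submodule.map_comp]
  have hmap' : V.map A.mulVecLin = (V.map (Aᵀ * A).mulVecLin).map A.mulVecLin := by
    rw [← Submodule.map_comp]
    exact SetLike.coe_injective (Set.image_congr fun v hv => (hA v hv).symm)
  have hfinrank : finrank F (V.map (Aᵀ * A).mulVecLin) = finrank F (V.map A.mulVecLin) := by
    apply le_antisymm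
    · rw [hmap]
      exact Submodule.finrank_map_le _ _
    · rw [hmap']
      exact Submodule.finrank_map_le _ _
  rw [trace_eq_finrank_range_of_isIdempotentElem hidem, hrange, hfinrank]

/-- For a generalized geometric Brascamp–Lieb datum, any subspace of
`K = ⋂ⱼ (ker Cⱼ + ker(I − Cⱼᵀ Cⱼ))` invariant under all `Cᵢᵀ Cᵢ` is critical. -/
theorem critical_of_invariant_subspace_of_K
    {n m : ℕ} (hm : 1 ≤ m) {ni : Fin m → ℕ}
    (C : ∀ j, Matrix (Fin (ni j)) (Fin n) ℝ)
    (hCsurj : ∀ j, Function.Surjective (C j).mulVec)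
    (hker : ∀ x : Fin n → ℝ, (∀ j, (C j).mulVec x = 0) → x = 0)
    (p : Fin m → ℝ) (hp : ∀ j, 0 < p j)
    (Q : ∀ j, Matrix (Fin (ni j)) (Fin (ni j)) ℝ) (hQ : ∀ j, (Q j).PosDef)
    (hgeo : GeometricDatum C p Q)
    (V : Submodule ℝ (Fin n → ℝ))
    (hVK : V ≤ ⨅ j, (LinearMap.ker (C j).mulVecLin ⊔
      LinearMap.ker ((1 - (C j)ᵀ * C j : Matrix (Fin n) (Fin n) ℝ)).mulVecLin))
    (hinv : ∀ i, V.map (((C i)ᵀ * C i : Matrix (Fin n) (Fin n) ℝ)).mulVecLin ≤ V) :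
    (finrank ℝ V : ℝ) = ∑ i, p i * (finrank ℝ (V.map (C i).mulVecLin) : ℝ) := by
  have hinv' : ∀ i, ∀ v ∈ V, ((C i)ᵀ * C i).mulVecLin v ∈ V := fun i v hv =>
    hinv i (Submodule.mem_map_of_mem hv)
  have hsum : ∑ i, p i • ((C i)ᵀ * C i).mulVecLin.restrict (hinv' i) = LinearMap.id := by
    ext1 v
    apply Subtype.ext
    simpa [LinearMap.sum_apply, sum_mulVec, smul_mulVec, -mulVecLin_mul] using
      congrArg (· *ᵥ (v : Fin n → ℝ)) hgeo.2.2.2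
  rw [← LinearMap.trace_id ℝ V, ← hsum, map_sum]
  refine Finset.sum_congr rfl fun i _ => ?_
  rw [map_smul, smul_eq_mul, trace_restrict_gram_eq_finrank_map (C i) V (hinv' i) fun v hv =>
    mulVec_gram_mulVec_of_mem_sup (C i) ((Submodule.mem_iInf _).1 (hVK hv) i)]
end
end
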